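/- arXiv:1908.06020 — 4 statements merged into one kernel-verified Lean document; each statement's English description precedes it below -/
import Mathlib

section
/- Let the square polynomial system 𝒢 (in the kn + k² unknowns (y_1,…,y_k,Λ)) be as described. If for some p* ∈ ℂ^ℓ and some injective list of k monomials of total degree at most d the system 𝒢 has a nonsingular solution (q_1,…,q_k,Λ*), then HF_I(d) ≥ k, i.e., C(n+d,d) − dim_𝔎 I_{≤d} ≥ k. -/
/-!
The monomials `m₁,…,m_k` are linearly independent modulo `I`. Given this, their span and `I_{≤d}`
are disjoint subspaces of the `C(n+d,d)`-dimensional space of polynomials of degree at most `d`.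

For the independence, clear denominators: it is enough to see that a `g ∈ ⟨H₁,…,Hₙ⟩ ⊆ ℚ[p][x]`
supported on the `m_j` is zero. By the implicit function theorem the nonsingular zero of `𝒢_{p*}`
deforms to a zero `(y₁,…,y_k,Λ)` of `𝒢_p` for every `p` near `p*`. Since `g` specialized at `p`
vanishes at the `y_i`, its coefficient vector `c` satisfies `S_d(y) c = 0`, hence
`c = Λ S_d(y) c = 0`. So every coefficient of `g` is a polynomial in `p` vanishing on a nonempty
open set.
-/

open MvPolynomial

set_option synthInstance.maxHeartbeats 1000000
set_option maxHeartbeats 1000000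

/-- The rational function field `𝔎 = ℚ(p₁,…,p_ℓ)`. -/
abbrev RatFuncField (ℓ : ℕ) : Type := FractionRing (MvPolynomial (Fin ℓ) ℚ)

/-- The specialization `h_{j,p*} ∈ ℂ[x₁,…,xₙ]` of `H_j ∈ ℚ[p₁,…,p_ℓ][x₁,…,xₙ]` at
`p* ∈ ℂ^ℓ`. -/
noncomputable def specialize {ℓ n : ℕ} (pstar : Fin ℓ → ℂ)
    (Hj : MvPolynomial (Fin n) (MvPolynomial (Fin ℓ) ℚ)) : MvPolynomial (Fin n) ℂ :=
  map ((aeval pstar : MvPolynomial (Fin ℓ) ℚ →ₐ[ℚ] ℂ) : MvPolynomial (Fin ℓ) ℚ →+* ℂ) Hj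

/-- The square polynomial system `𝒢` in the `kn + k²` unknowns `(y₁,…,y_k,Λ)`: the equations
`G_{p*}(yᵢ) = 0` for `i = 1,…,k`, together with `Λ·S_d(y₁,…,y_k) = I_k`, where
`S_d(y₁,…,y_k)` is the `k×k` matrix with `(i,j)` entry `m_j(yᵢ)` for an injective list
`m₁,…,m_k` of monomials (given by exponent vectors `m : Fin k → (Fin n →₀ ℕ)`). -/
noncomputable def sysG {ℓ n k : ℕ} (pstar : Fin ℓ → ℂ)
    (H : Fin n → MvPolynomial (Fin n) (MvPolynomial (Fin ℓ) ℚ))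
    (m : Fin k → (Fin n →₀ ℕ)) :
    ((Fin k → Fin n → ℂ) × (Fin k → Fin k → ℂ)) →
      ((Fin k → Fin n → ℂ) × (Fin k → Fin k → ℂ)) :=
  fun z =>
    (fun a j => eval (z.1 a) (specialize pstar (H j)),
     fun a b =>
       (∑ c : Fin k, z.2 a c * ∏ t : Fin n, z.1 c t ^ (m b) t) -
         if a = b then 1 else 0)

open scoped Topology Matrix

theorem ncard_setOf_degree_le (σ : Type*) [Fintype σ] (d : ℕ) :
    {s : σ →₀ ℕ | s.degree ≤ d}.ncard = (Fintype.card σ + d).choose d := by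
  classical
  have h_union : {s : σ →₀ ℕ | s.degree ≤ d} =
      ↑((Finset.range (d + 1)).biUnion (Finset.finsuppAntidiag (Finset.univ : Finset σ))) := by
    ext s
    simp [Finsupp.degree_eq_sum]
  have h_disjoint : ((Finset.range (d + 1) : Finset ℕ) : Set ℕ).PairwiseDisjoint
      (Finset.finsuppAntidiag (Finset.univ : Finset σ)) := by
    intro i _ j _ hij
    refine Finset.disjoint_left.2 fun s hi hj => hij ?_
    exact (Finset.mem_finsuppAntidiag.1 hi).1.symm.trans (Finset.mem_finsuppAntidiag.1 hj).1
  rw [h_union, Set.ncard_coe_finset, Finset.card_biUnion h_disjoint]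
  simp only [Finset.card_finsuppAntidiag_nat_eq_multichoose, Finset.card_univ]
  rw [Nat.sum_range_multichoose, add_comm, Nat.choose_symm_add]

theorem finrank_restrictSupport {σ : Type*} (R : Type*) [CommRing R] [Nontrivial R]
    (S : Set (σ →₀ ℕ)) : Module.finrank R (restrictSupport R S) = S.ncard :=
  Module.finrank_eq_nat_card_basis (basisRestrictSupport R S)

theorem finrank_restrictTotalDegree (σ R : Type*) [Fintype σ] [CommRing R] [Nontrivial R] (d : ℕ) :
    Module.finrank R (restrictTotalDegree σ R d) = (Fintype.card σ + d).choose d :=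
  (finrank_restrictSupport R _).trans (ncard_setOf_degree_le σ d)

theorem finrank_add_finrank_le_of_disjoint_of_le {K V : Type*} [DivisionRing K] [AddCommGroup V]
    [Module K V] {s t W : Submodule K V} [FiniteDimensional K W] (hs : s ≤ W) (ht : t ≤ W)
    (hst : Disjoint s t) : Module.finrank K s + Module.finrank K t ≤ Module.finrank K W := by
  have := Submodule.finiteDimensional_of_le hs
  have := Submodule.finiteDimensional_of_le ht
  calc Module.finrank K s + Module.finrank K t
      = Module.finrank K ↥(s ⊔ t) := by
        rw [← Submodule.finrank_sup_add_finrank_inf_eq, hst.eq_bot, finrank_bot, add_zero]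
    _ ≤ Module.finrank K W := Submodule.finrank_mono (sup_le hs ht)

theorem ncard_le_choose_sub_finrank_of_disjoint {σ K : Type*} [Fintype σ] [Field K] {d : ℕ}
    {S : Set (σ →₀ ℕ)} (hS : ∀ s ∈ S, s.degree ≤ d) {J : Submodule K (MvPolynomial σ K)}
    (hJ : Disjoint (restrictSupport K S) J) :
    S.ncard ≤ (Fintype.card σ + d).choose d -
      Module.finrank K ↥(J ⊓ restrictTotalDegree σ K d) := by
  have h_le : restrictSupport K S ≤ restrictTotalDegree σ K d := restrictSupport_mono K hS
  have h_disjoint : Disjoint (restrictSupport K S) (J ⊓ restrictTotalDegree σ K d) :=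
    hJ.mono_right inf_le_left
  have h_add := finrank_add_finrank_le_of_disjoint_of_le h_le inf_le_right h_disjoint
  rw [finrank_restrictSupport, finrank_restrictTotalDegree] at h_add
  exact Nat.le_sub_of_add_le h_add

theorem disjoint_restrictSupport_map_of_isLocalization {σ A B : Type*} [CommRing A] [CommRing B]
    [Algebra A B] {M : Submonoid A} [IsLocalization M B] (hM : M ≤ nonZeroDivisors A)
    {S : Set (σ →₀ ℕ)} {J : Ideal (MvPolynomial σ A)}
    (hJ : Disjoint (restrictSupport A S) (J.restrictScalars A)) :
    Disjoint (restrictSupport B S) ((J.map (map (algebraMap A B))).restrictScalars B) := by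
  refine Submodule.disjoint_def.2 fun f hfS hfJ => ?_
  let : Algebra (MvPolynomial σ A) (MvPolynomial σ B) := algebraMvPolynomial
  obtain ⟨⟨⟨g, hgJ⟩, ⟨_, s, hs, rfl⟩⟩, hfg⟩ :=
    (IsLocalization.mem_map_algebraMap_iff (M.map (C (σ := σ))) (MvPolynomial σ B)).1 hfJ
  replace hfg : algebraMap A B s • f = map (algebraMap A B) g := by
    dsimp only at hfg
    rwa [algebraMap_def, map_C, mul_comm, ← smul_eq_C_mul] at hfg
  have hgS : g ∈ restrictSupport A S := by
    rw [mem_restrictSupport_iff, ← support_map_of_injective g (IsLocalization.injective B hM),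
      ← hfg]
    exact (restrictSupport B S).smul_mem _ hfS
  have hg : g = 0 := Submodule.disjoint_def.1 hJ g hgS hgJ
  rwa [hg, map_zero, (IsLocalization.map_units B (⟨s, hs⟩ : M)).smul_eq_zero] at hfg

section Interpolation

/-- The generalized Vandermonde matrix `S_d(y)`, with `(i, j)` entry `m_j(y_i)`; monomials are given
by their exponent vectors. -/
noncomputable def monomialMatrix {ι κ σ R : Type*} [CommSemiring R] (m : κ → σ →₀ ℕ)
    (y : ι → σ → R) : Matrix ι κ R :=
  .of fun i j => eval (y i) (monomial (m j) 1)

variable {ι κ σ R : Type*} [CommSemiring R] {m : κ → σ →₀ ℕ} {f : MvPolynomial σ R}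

theorem eq_sum_monomial_of_mem_restrictSupport_range [Fintype κ] (hm : Function.Injective m)
    (hf : f ∈ restrictSupport R (Set.range m)) : f = ∑ j, monomial (m j) (coeff (m j) f) := by
  classical
  ext s
  simp only [coeff_sum, coeff_monomial]
  by_cases hs : s ∈ Set.range m
  · obtain ⟨j, rfl⟩ := hs
    simp [hm.eq_iff]
  · have h_coeff : coeff s f = 0 := notMem_support_iff.1 fun h => hs (hf h)
    rw [h_coeff]
    exact (Finset.sum_eq_zero fun j _ => if_neg fun h => hs ⟨j, h⟩).symm

theorem eval_eq_monomialMatrix_mulVec [Fintype κ] (hm : Function.Injective m)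
    (hf : f ∈ restrictSupport R (Set.range m)) (y : ι → σ → R) :
    (fun i => eval (y i) f) = monomialMatrix m y *ᵥ fun j => coeff (m j) f := by
  ext i
  conv_lhs => rw [eq_sum_monomial_of_mem_restrictSupport_range hm hf]
  simp [monomialMatrix, Matrix.mulVec, dotProduct, eval_monomial, mul_comm]

theorem eq_zero_of_eval_eq_zero_of_mul_monomialMatrix_eq_one [Fintype ι] [Finite κ]
    [DecidableEq κ] (hm : Function.Injective m) (hf : f ∈ restrictSupport R (Set.range m))
    {y : ι → σ → R} {Λ : Matrix κ ι R} (hΛ : Λ * monomialMatrix m y = 1)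
    (hy : ∀ i, eval (y i) f = 0) : f = 0 := by
  have := Fintype.ofFinite κ
  have h_coeff : (fun j => coeff (m j) f) = 0 := calc
    (fun j => coeff (m j) f) = (Λ * monomialMatrix m y) *ᵥ fun j => coeff (m j) f := by
      rw [hΛ, Matrix.one_mulVec]
    _ = Λ *ᵥ fun i => eval (y i) f := by
      rw [eval_eq_monomialMatrix_mulVec hm hf, Matrix.mulVec_mulVec]
    _ = 0 := by simp only [hy, ← Pi.zero_def, Matrix.mulVec_zero]
  rw [eq_sum_monomial_of_mem_restrictSupport_range hm hf]
  exact Finset.sum_eq_zero fun j _ => by rw [congrFun h_coeff j, Pi.zero_apply, map_zero]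

end Interpolation

theorem eq_zero_of_eventually_aeval_eq_zero {σ R A : Type*} [CommRing R] [CommRing A] [IsDomain A]
    [Algebra R A] [FaithfulSMul R A] [TopologicalSpace A] [T1Space A] [∀ a : A, (𝓝[≠] a).NeBot]
    {f : MvPolynomial σ R} {a : σ → A} (hf : ∀ᶠ x in 𝓝 a, aeval x f = 0) : f = 0 := by
  rw [Filter.Eventually, nhds_pi, Filter.mem_pi] at hf
  obtain ⟨I, -, U, hU, hIU⟩ := hf
  refine map_injective (algebraMap R A) (FaithfulSMul.algebraMap_injective R A) ?_
  refine funext_set U (fun i => infinite_of_mem_nhds (a i) (hU i)) fun x hx => ?_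
  rw [eval_map, ← aeval_def, map_zero, map_zero]
  exact hIU fun i _ => hx i trivial

theorem eventually_exists_apply_eq_of_bijective_fderiv {𝕜 E₁ E₂ F : Type*}
    [NontriviallyNormedField 𝕜] [NormedAddCommGroup E₁] [NormedSpace 𝕜 E₁] [CompleteSpace E₁]
    [NormedAddCommGroup E₂] [NormedSpace 𝕜 E₂] [CompleteSpace E₂]
    [NormedAddCommGroup F] [NormedSpace 𝕜 F] [CompleteSpace F]
    {f : E₁ × E₂ → F} {f' : E₁ × E₂ →L[𝕜] F} {a : E₁} {b : E₂} (hf : HasStrictFDerivAt f f' (a, b))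
    (hb : Function.Bijective (fderiv 𝕜 (fun y => f (a, y)) b)) :
    ∀ᶠ x in 𝓝 a, ∃ y, f (x, y) = f (a, b) := by
  have h_partial : fderiv 𝕜 (fun y => f (a, y)) b = f' ∘L .inr 𝕜 E₁ E₂ :=
    (hf.hasFDerivAt.comp b (hasFDerivAt_prodMk_right a b)).fderiv
  rw [h_partial] at hb
  have h_inv : (f' ∘L .inr 𝕜 E₁ E₂).IsInvertible :=
    ⟨.ofBijective _ (LinearMap.ker_eq_bot.2 hb.1) (LinearMap.range_eq_top.2 hb.2),
      ContinuousLinearEquiv.coe_ofBijective ..⟩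
  exact (hf.eventually_apply_implicitFunctionOfProdDomain h_inv).mono fun x hx => ⟨_, hx⟩

theorem contDiff_eval_map_aeval {𝕜 E σ τ R : Type*} [NontriviallyNormedField 𝕜]
    [NormedAddCommGroup E] [NormedSpace 𝕜 E] [Fintype σ] [Fintype τ] [CommSemiring R] [Algebra R 𝕜]
    (f : MvPolynomial σ (MvPolynomial τ R)) {r : WithTop ℕ∞} {p : E → τ → 𝕜} {y : E → σ → 𝕜}
    (hp : ContDiff 𝕜 r p) (hy : ContDiff 𝕜 r y) :
    ContDiff 𝕜 r fun x =>
      eval (y x) (map ((aeval (p x) : MvPolynomial τ R →ₐ[R] 𝕜) : MvPolynomial τ R →+* 𝕜) f) := by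
  simp only [eval_map, eval₂_eq', RingHom.coe_coe, aeval_def]
  fun_prop

section System

variable {ℓ n k : ℕ} {H : Fin n → MvPolynomial (Fin n) (MvPolynomial (Fin ℓ) ℚ)}
  {m : Fin k → Fin n →₀ ℕ} {p : Fin ℓ → ℂ} {w : (Fin k → Fin n → ℂ) × (Fin k → Fin k → ℂ)}

theorem sysG_eq_zero_iff :
    sysG p H m w = 0 ↔ (∀ i j, eval (w.1 i) (specialize p (H j)) = 0) ∧
      Matrix.of w.2 * monomialMatrix m w.1 = 1 := by
  simp [sysG, Prod.ext_iff, funext_iff, ← Matrix.ext_iff, Matrix.mul_apply, Matrix.one_apply,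
    monomialMatrix, eval_monomial, Finsupp.prod_fintype, sub_eq_zero]

theorem specialize_eq_zero_of_mem_span (hm : Function.Injective m) (hw : sysG p H m w = 0)
    {g : MvPolynomial (Fin n) (MvPolynomial (Fin ℓ) ℚ)} (hgH : g ∈ Ideal.span (Set.range H))
    (hgm : g ∈ restrictSupport _ (Set.range m)) : specialize p g = 0 := by
  obtain ⟨h_eval, hΛ⟩ := sysG_eq_zero_iff.1 hw
  have h_support : specialize p g ∈ restrictSupport ℂ (Set.range m) :=
    Set.Subset.trans (Finset.coe_subset.2 (support_map_subset _ g)) hgm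
  refine eq_zero_of_eval_eq_zero_of_mul_monomialMatrix_eq_one hm h_support hΛ fun i => ?_
  have h_span : Ideal.span (Set.range H) ≤ RingHom.ker ((eval (w.1 i)).comp
      (map ((aeval p : MvPolynomial (Fin ℓ) ℚ →ₐ[ℚ] ℂ) : MvPolynomial (Fin ℓ) ℚ →+* ℂ))) :=
    Ideal.span_le.2 (Set.range_subset_iff.2 (h_eval i))
  exact h_span hgH

theorem disjoint_restrictSupport_span_of_eventually_exists_zero (hm : Function.Injective m)
    (hp : ∀ᶠ q in 𝓝 p, ∃ w, sysG q H m w = 0) :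
    Disjoint (restrictSupport (MvPolynomial (Fin ℓ) ℚ) (Set.range m))
      ((Ideal.span (Set.range H)).restrictScalars (MvPolynomial (Fin ℓ) ℚ)) := by
  refine Submodule.disjoint_def.2 fun g hgm hgH => MvPolynomial.ext _ _ fun s => ?_
  refine eq_zero_of_eventually_aeval_eq_zero (hp.mono fun q ⟨w, hw⟩ => ?_)
  have h_coeff := congrArg (coeff s) (specialize_eq_zero_of_mem_span hm hw hgH hgm)
  rwa [specialize, coeff_map, coeff_zero] at h_coeff

theorem contDiff_sysG (H : Fin n → MvPolynomial (Fin n) (MvPolynomial (Fin ℓ) ℚ))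
    (m : Fin k → Fin n →₀ ℕ) (r : WithTop ℕ∞) :
    ContDiff ℂ r fun x : (Fin ℓ → ℂ) × (Fin k → Fin n → ℂ) × (Fin k → Fin k → ℂ) =>
      sysG x.1 H m x.2 := by
  refine ContDiff.prodMk (contDiff_pi.2 fun i => contDiff_pi.2 fun j => ?_) (by fun_prop)
  exact contDiff_eval_map_aeval (H j) (by fun_prop) (by fun_prop)

theorem eventually_exists_sysG_eq_zero (hw : sysG p H m w = 0)
    (hreg : Function.Bijective (fderiv ℂ (sysG p H m) w)) :
    ∀ᶠ q in 𝓝 p, ∃ w, sysG q H m w = 0 := by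
  simpa only [hw] using eventually_exists_apply_eq_of_bijective_fderiv
    ((contDiff_sysG H m 1).contDiffAt.hasStrictFDerivAt one_ne_zero) hreg

end System

/-- Theorem 3.1 of the paper.  If for some `p* ∈ ℂ^ℓ` and some injective list
of `k` monomials of total degree at most `d` the system `𝒢` has a nonsingular solution
(a zero at which the derivative of `𝒢 : ℂ^{kn+k²} → ℂ^{kn+k²}` is invertible), then
`HF_I(d) ≥ k`, i.e. `C(n+d,d) − dim_𝔎 I_{≤d} ≥ k`, where `I = ⟨h₁,…,hₙ⟩ ⊆ 𝔎[x₁,…,xₙ]` is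
generated by the images of the `H_j` in `𝔎[x₁,…,xₙ]`, `𝔎 = ℚ(p₁,…,p_ℓ)`. -/
theorem certified_hilbert_lower_bound (ℓ n k d : ℕ)
    (H : Fin n → MvPolynomial (Fin n) (MvPolynomial (Fin ℓ) ℚ))
    (pstar : Fin ℓ → ℂ)
    (m : Fin k → (Fin n →₀ ℕ)) (hm : Function.Injective m)
    (hmd : ∀ j, ((m j).sum fun _ e => e) ≤ d)
    (z : (Fin k → Fin n → ℂ) × (Fin k → Fin k → ℂ))
    (hz : sysG pstar H m z = 0)
    (hreg : Function.Bijective (fderiv ℂ (sysG pstar H m) z)) :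
    k ≤ Nat.choose (n + d) d -
        Module.finrank (RatFuncField ℓ)
          ↥((Ideal.span (Set.range fun j =>
                map (algebraMap (MvPolynomial (Fin ℓ) ℚ) (RatFuncField ℓ))
                  (H j))).restrictScalars (RatFuncField ℓ) ⊓
            restrictTotalDegree (Fin n) (RatFuncField ℓ) d) := by
  have h_polynomial : Disjoint (restrictSupport _ (Set.range m))
      ((Ideal.span (Set.range H)).restrictScalars (MvPolynomial (Fin ℓ) ℚ)) :=
    disjoint_restrictSupport_span_of_eventually_exists_zero hm <|
      eventually_exists_sysG_eq_zero hz hreg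
  have h_field := disjoint_restrictSupport_map_of_isLocalization (B := RatFuncField ℓ) le_rfl
    h_polynomial
  rw [Ideal.map_span, ← Set.range_comp] at h_field
  have h_bound := ncard_le_choose_sub_finrank_of_disjoint (Set.forall_mem_range.2 hmd) h_field
  rwa [Set.ncard_range_of_injective hm, Nat.card_fin, Fintype.card_fin] at h_bound
end

section
/- There exist a nonzero polynomial c with rational coefficients in the i·n + (n−i)·r + r parameter entries of (Θ,Λ,μ) and a nonnegative integer g_i such that for every (Θ,Λ,μ) ∈ ℚ^{i×n} × ℚ^{(n−i)×r} × ℚ^r with c(Θ,Λ,μ) ≠ 0: the quotient ℚ[x_1,…,x_n,T]/I_i(Θ,Λ,μ) is a finite-dimensional ℚ-vector space of dimension exactly g_i (this includes the case that I_i(Θ,Λ,μ) is the unit ideal, with g_i = 0), and the set {x ∈ ℂ^n : Θ·x = 1, Λ·f(x) = 0} \ X is finite with exactly g_i elements. In particular dim_ℚ(ℚ[x_1,…,x_n,T]/I_i(Θ,Λ,μ)) is independent of the choice of (Θ,Λ,μ) subject to c(Θ,Λ,μ) ≠ 0. -/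
/-!
Let `A = k[Θ, Λ, μ]` be the polynomial ring in the parameters and `L` an algebraic closure of its
fraction field.

*Transversality* (an algebraic Bertini theorem). As `L` is formally étale over `A`, derivations of
`L` take arbitrary values on the parameters. Let `x ∈ Lⁿ` satisfy `Θ x = 1`, `Λ f(x) = 0` and
`f(x) ≠ 0`, with generic coefficients. Differentiating the equations along a derivation `D` shows
that the Jacobian of the system at `x` maps `-D x` to `(DΘ · x, DΛ · f(x))`. Since `Θ x = 1` and
`f(x) ≠ 0`, this pair is arbitrary, so the Jacobian is surjective. It is therefore invertible when
there are `n` equations, and the further equation `μ · f(x) = 0` leaves no solution with `f(x) ≠ 0`.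

*Spreading out.* By the Nullstellensatz and clearing denominators, there is a nonzero `c ∈ A` such
that at every parameter with `c ≠ 0` the Jacobian determinant of the system is a unit modulo its
equations and `μ · f` vanishes at no point of `{Θ x = 1, Λ f(x) = 0} \ X`. The first property makes
the quotient algebra étale; applied to `Frac A`, it shows that the universal quotient algebra has
finite rank over `A`. It is then free over some `A[1/c]`, so its fibres have constant dimension.

*Counting.* A finite étale algebra over a field has as many points in a separably closed extension
as its dimension, and these points are those of `{Θ x = 1, Λ f(x) = 0} \ X`, the coordinate `T`
being forced to equal `(μ · f(x))⁻¹`.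
-/

open MvPolynomial

/-- The ideal `I_i(Θ,Λ,μ) ⊆ ℚ[x₁,…,xₙ,T]` generated by the `i` entries of `Θ·x − 1`, the
`n−i` entries of `Λ·f`, and the polynomial `1 − (μ·f)·T`.  The variable ring is
`MvPolynomial (Fin n ⊕ Unit) ℚ`, where `Sum.inl j` is `x_j` and `Sum.inr ()` is `T`. -/
noncomputable def satIdeal {n r : ℕ} (i : ℕ) (f : Fin r → MvPolynomial (Fin n) ℚ)
    (Θ : Matrix (Fin i) (Fin n) ℚ) (Λ : Matrix (Fin (n - i)) (Fin r) ℚ)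
    (μ : Fin r → ℚ) : Ideal (MvPolynomial (Fin n ⊕ Unit) ℚ) :=
  Ideal.span
    ((Set.range fun k : Fin i =>
        (∑ j : Fin n, C (Θ k j) * X (Sum.inl j)) - 1) ∪
      (Set.range fun k : Fin (n - i) =>
        ∑ j : Fin r, C (Λ k j) * rename Sum.inl (f j)) ∪
      {1 - (∑ j : Fin r, C (μ j) * rename Sum.inl (f j)) * X (Sum.inr ())})

open scoped TensorProduct

section GenericFreeness

theorem submodule_eq_top_of_adjoin_eq_top {R B : Type*} [CommSemiring R] [Semiring B] [Algebra R B]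
    {s : Set B} (hs : Algebra.adjoin R s = ⊤) {N : Submodule R B} (one_mem : 1 ∈ N)
    (mul_mem : ∀ t ∈ s, ∀ y ∈ N, t * y ∈ N) : N = ⊤ := by
  have mul_mem' : ∀ z, ∀ y ∈ N, z * y ∈ N := fun z => by
    have hz : z ∈ Algebra.adjoin R s := hs ▸ Algebra.mem_top
    induction hz using Algebra.adjoin_induction with
    | mem t ht => exact mul_mem t ht
    | algebraMap r => exact fun y hy => by simpa [← Algebra.smul_def] using N.smul_mem r hy
    | add a b _ _ ha hb => exact fun y hy => by simpa [add_mul] using N.add_mem (ha y hy) (hb y hy)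
    | mul a b _ _ ha hb => exact fun y hy => by simpa [mul_assoc] using ha _ (hb y hy)
  exact eq_top_iff.mpr fun z _ => by simpa using mul_mem' z 1 one_mem

variable {A : Type*} [CommRing A]

theorem finrank_tensor_eq_of_isUnit (B : Type*) [CommRing B] [Algebra A B] {c : A}
    [Module.Free (Localization.Away c) (Localization.Away c ⊗[A] B)]
    {F : Type*} [CommRing F] [Nontrivial F] [Algebra A F] (hc : IsUnit (algebraMap A F c)) :
    Module.finrank F (F ⊗[A] B) =
      Module.finrank (Localization.Away c) (Localization.Away c ⊗[A] B) := by
  let _ : Algebra (Localization.Away c) F := (IsLocalization.Away.lift c hc).toAlgebra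
  have : IsScalarTower A (Localization.Away c) F :=
    .of_algebraMap_eq fun a => (IsLocalization.Away.lift_eq c hc a).symm
  have : Nontrivial (Localization.Away c) := (algebraMap (Localization.Away c) F).domain_nontrivial
  let e := TensorProduct.AlgebraTensorModule.cancelBaseChange A (Localization.Away c) F F B
  rw [← e.finrank_eq, Module.finrank_baseChange]

variable [IsDomain A]

theorem exists_set_linearIndependent_isTorsion_quotient (M : Type*) [AddCommGroup M] [Module A M]
    (hM : Module.rank A M < Cardinal.aleph0) :
    ∃ b : Set M, b.Finite ∧ LinearIndepOn A id b ∧ Module.IsTorsion A (M ⧸ Submodule.span A b) := by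
  obtain ⟨b, hcard, hb⟩ := exists_set_linearIndependent_of_isDomain A M
  refine ⟨b, Cardinal.lt_aleph0_iff_set_finite.mp (hcard ▸ hM), hb, ?_⟩
  have h := rank_quotient_add_rank_of_isDomain (Submodule.span A b)
  rw [rank_span_set hb, hcard] at h
  exact Module.rank_eq_zero_iff_isTorsion.mp
    (Cardinal.eq_of_add_eq_add_right (h.trans (zero_add _).symm) hM)

theorem exists_ne_zero_smul_mem_of_isTorsion_quotient {M : Type*} [AddCommGroup M] [Module A M]
    {N : Submodule A M} (hN : Module.IsTorsion A (M ⧸ N)) {s : Set M} (hs : s.Finite) :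
    ∃ a : A, a ≠ 0 ∧ ∀ y ∈ s, a • y ∈ N := by
  induction s, hs using Set.Finite.induction_on with
  | empty => exact ⟨1, one_ne_zero, by simp⟩
  | @insert y s _ _ ih =>
    obtain ⟨a, ha, has⟩ := ih
    obtain ⟨d, hd⟩ := hN (x := N.mkQ y)
    refine ⟨a * d, mul_ne_zero ha (nonZeroDivisors.ne_zero d.2), ?_⟩
    rintro z (rfl | hz)
    · have : (d : A) • z ∈ N := by
        rwa [← N.ker_mkQ, LinearMap.mem_ker, map_smul]
      exact mul_smul a (d : A) z ▸ N.smul_mem a this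
    · exact mul_comm a d ▸ mul_smul (d : A) a z ▸ N.smul_mem (d : A) (has z hz)

theorem exists_localizationAway_tensor_free (B : Type*) [CommRing B] [Algebra A B]
    [Algebra.FiniteType A B] (hB : Module.rank A B < Cardinal.aleph0) :
    ∃ c : A, c ≠ 0 ∧ Module.Free (Localization.Away c) (Localization.Away c ⊗[A] B) := by
  obtain ⟨b, hb, hli, htor⟩ := exists_set_linearIndependent_isTorsion_quotient B hB
  obtain ⟨s, hs⟩ := ‹Algebra.FiniteType A B›.out
  obtain ⟨c, hc, hcb⟩ := exists_ne_zero_smul_mem_of_isTorsion_quotient htor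
    ((Set.finite_singleton (1 : B)).union (s.finite_toSet.mul hb))
  -- After inverting `c`, the span of `b` contains `1` and is stable under the generators `s`.
  let R := Localization.Away c
  let ι : B →ₗ[A] R ⊗[A] B := TensorProduct.mk A R B 1
  have : IsLocalizedModule (.powers c) ι :=
    (isLocalizedModule_iff_isBaseChange (.powers c) R _).mpr (TensorProduct.isBaseChange A B R)
  have hli' : LinearIndependent R fun y : b => ι y :=
    LinearIndependent.of_isLocalizedModule R (.powers c) ι hli
  let N : Submodule R (R ⊗[A] B) := Submodule.span R (Set.range fun y : b => ι y)
  have mem_of_smul_mem {y : B} (hy : c • y ∈ Submodule.span A b) : ι y ∈ N := by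
    have h : ι (c • y) ∈ N := by
      have := Submodule.mem_map_of_mem (f := ι) hy
      rw [Submodule.map_span, Set.image_eq_range] at this
      exact Submodule.span_le_restrictScalars A R _ this
    rwa [map_smul, ← algebraMap_smul R c,
      N.smul_mem_iff_of_isUnit (IsLocalization.Away.algebraMap_isUnit c)] at h
  have hN : N = ⊤ := by
    refine submodule_eq_top_of_adjoin_eq_top (s := ι '' s) ?_ ?_ ?_
    · exact Algebra.TensorProduct.adjoin_one_tmul_image_eq_top _ hs
    · exact mem_of_smul_mem (hcb 1 (.inl rfl))
    · rintro _ ⟨t, ht, rfl⟩ y hy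
      induction hy using Submodule.span_induction with
      | mem y hy =>
        obtain ⟨y, rfl⟩ := hy
        have := mem_of_smul_mem (hcb (t * y) (.inr (Set.mul_mem_mul ht y.2)))
        simpa [ι] using this
      | zero => simp
      | add y z _ _ hy hz => rw [mul_add]; exact N.add_mem hy hz
      | smul a y _ hy => rw [mul_smul_comm]; exact N.smul_mem a hy
  exact ⟨c, hc, .of_basis (.mk hli' hN.ge)⟩

end GenericFreeness

section Etale

variable {k : Type*} [Field k]

theorem card_algHom_eq_finrank (R Ω : Type*) [CommRing R] [Algebra k R] [Algebra.EssFiniteType k R]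
    [Algebra.FormallyUnramified k R] [Field Ω] [IsSepClosed Ω] [Algebra k Ω] :
    Nat.card (R →ₐ[k] Ω) = Module.finrank k R := by
  have : Algebra.FormallyEtale k R := .of_formallyUnramified_of_field k R
  have := Algebra.FormallyUnramified.finite_of_free k R
  have : IsArtinianRing (Ω ⊗[k] R) := .of_finite Ω _
  cases nonempty_fintype (PrimeSpectrum (Ω ⊗[k] R))
  have split := (Algebra.FormallyEtale.equivPiOfIsSepClosed Ω (Ω ⊗[k] R)).toLinearEquiv.finrank_eq
  rw [Module.finrank_baseChange, Module.finrank_fintype_fun_eq_card] at split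
  rw [split, ← Nat.card_eq_fintype_card]
  exact Nat.card_congr ((Algebra.TensorProduct.liftEquivRight k Ω R Ω).trans
    (Algebra.IsFiniteSplit.algHomEquivPrimeSpectrum Ω _))

variable {τ : Type*}

/-- The `k`-algebra maps from `k[τ] ⧸ I` to `Ω`, as the solutions in `Ω` of the equations in `I`. -/
noncomputable def quotientAlgHomEquivZeroLocus (I : Ideal (MvPolynomial τ k)) (Ω : Type*) [Field Ω]
    [Algebra k Ω] : (MvPolynomial τ k ⧸ I →ₐ[k] Ω) ≃ zeroLocus Ω I where
  toFun φ := ⟨fun t => φ (Ideal.Quotient.mk I (X t)), fun p hp =>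
    (DFunLike.congr_fun (aeval_unique (φ.comp (Ideal.Quotient.mkₐ k I))) p).symm.trans <| by
      simp [Ideal.Quotient.eq_zero_iff_mem.mpr hp]⟩
  invFun x := Ideal.Quotient.liftₐ I (aeval x.1) x.2
  left_inv _ := Ideal.Quotient.algHom_ext k <| MvPolynomial.algHom_ext fun t => aeval_X _ t
  right_inv _ := Subtype.ext <| funext fun t => aeval_X _ t

theorem zeroLocus_finite_and_ncard_eq_finrank [Finite τ] (I : Ideal (MvPolynomial τ k))
    [Algebra.FormallyUnramified k (MvPolynomial τ k ⧸ I)] (Ω : Type*) [Field Ω] [IsSepClosed Ω]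
    [Algebra k Ω] :
    (zeroLocus Ω I).Finite ∧
      (zeroLocus Ω I).ncard = Module.finrank k (MvPolynomial τ k ⧸ I) := by
  have := Algebra.FormallyUnramified.finite_of_free k (MvPolynomial τ k ⧸ I)
  have e := quotientAlgHomEquivZeroLocus I Ω
  refine ⟨Set.finite_coe_iff.mp (.of_equiv _ e), ?_⟩
  rw [← card_algHom_eq_finrank (MvPolynomial τ k ⧸ I) Ω, Nat.card_congr e]
  rfl

end Etale

section Jacobian

variable {R S τ : Type*} [CommRing R] [CommRing S]

theorem map_span_range {E : Type*} (φ : R →+* S) (v : E → MvPolynomial τ R) :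
    (Ideal.span (Set.range v)).map (map φ) = Ideal.span (Set.range fun e => map φ (v e)) := by
  rw [Ideal.map_span, ← Set.range_comp]
  rfl

variable [Fintype τ] [DecidableEq τ]

/-- The Jacobian determinant of as many polynomials as there are variables. -/
noncomputable def jacobianDet (v : τ → MvPolynomial τ R) : MvPolynomial τ R :=
  (Matrix.of fun e t => pderiv t (v e)).det

theorem map_jacobianDet (φ : R →+* S) (v : τ → MvPolynomial τ R) :
    map φ (jacobianDet v) = jacobianDet fun e => map φ (v e) := by
  simp only [jacobianDet, RingHom.map_det, pderiv_map]
  rfl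

theorem etale_of_isUnit_jacobianDet (v : τ → MvPolynomial τ R)
    (h : IsUnit (Ideal.Quotient.mk (Ideal.span (Set.range v)) (jacobianDet v))) :
    Algebra.Etale R (MvPolynomial τ R ⧸ Ideal.span (Set.range v)) := by
  let P := Algebra.PreSubmersivePresentation.naive (v := v) id Function.injective_id
  have hP : P.jacobiMatrix = (Matrix.of fun e t => pderiv t (v e)).transpose := by
    ext1 i j
    exact Algebra.PreSubmersivePresentation.jacobiMatrix_naive ..
  let Q : Algebra.SubmersivePresentation R (MvPolynomial τ R ⧸ Ideal.span (Set.range v)) τ τ :=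
    { P with
      jacobian_isUnit := by
        rw [P.jacobian_eq_jacobiMatrix_det, hP, Matrix.det_transpose]
        exact h }
  have : Algebra.IsStandardSmoothOfRelativeDimension 0 R
      (MvPolynomial τ R ⧸ Ideal.span (Set.range v)) :=
    Q.isStandardSmoothOfRelativeDimension (by simp [Algebra.Presentation.dimension])
  infer_instance

theorem etale_quotient_map_of_isUnit {v : τ → MvPolynomial τ R} {c : R}
    (hc : C c ∈ Ideal.span (Set.range v) ⊔ Ideal.span {jacobianDet v}) {φ : R →+* S}
    (hφ : IsUnit (φ c)) :
    Algebra.Etale S (MvPolynomial τ S ⧸ (Ideal.span (Set.range v)).map (map φ)) := by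
  rw [map_span_range]
  apply etale_of_isUnit_jacobianDet
  have hmem := Ideal.mem_map_of_mem (map φ) hc
  rw [Ideal.map_sup, map_span_range, Ideal.map_span, Set.image_singleton, map_jacobianDet,
    map_C, sup_comm] at hmem
  have hdvd := Ideal.mem_quotient_iff_mem_sup.mpr hmem
  rw [Ideal.map_span, Set.image_singleton, Ideal.mem_span_singleton] at hdvd
  exact isUnit_of_dvd_unit hdvd ((hφ.map C).map (Ideal.Quotient.mk _))

end Jacobian

section SpreadingOut

variable {A τ : Type*} [CommRing A]

/-- The base change to `S` of a quotient of a polynomial ring, presented by the same equations. -/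
noncomputable def tensorMvPolynomialQuotientEquiv (S : Type*) [CommRing S] [Algebra A S]
    (I : Ideal (MvPolynomial τ A)) :
    S ⊗[A] (MvPolynomial τ A ⧸ I) ≃ₐ[S] MvPolynomial τ S ⧸ I.map (map (algebraMap A S)) :=
  (Algebra.TensorProduct.tensorQuotientEquiv S (MvPolynomial τ A) S I).trans <|
    Ideal.quotientEquivAlg _ _ (algebraTensorAlgEquiv A S) <| by
      have h : (algebraTensorAlgEquiv (σ := τ) A S).toRingEquiv.toRingHom.comp
          (Algebra.TensorProduct.includeRight : MvPolynomial τ A →ₐ[A] _).toRingHom =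
            map (algebraMap A S) := by
        refine ringHom_ext (fun a => ?_) fun t => ?_ <;> simp
      rw [← h, ← Ideal.map_map]
      rfl

theorem forall_mem_span_range_aeval_eq_zero_iff {E S : Type*} [CommRing S] [Algebra A S]
    (v : E → MvPolynomial τ A) (x : τ → S) :
    (∀ q ∈ Ideal.span (Set.range v), aeval x q = 0) ↔ ∀ e, aeval x (v e) = 0 := by
  change Ideal.span (Set.range v) ≤ RingHom.ker (aeval x) ↔ _
  rw [Ideal.span_le, Set.range_subset_iff]
  rfl

variable [IsDomain A]

theorem exists_C_mul_pow_mem_of_forall_aeval_eq_zero [Finite τ] (L : Type*) [Field L]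
    [IsAlgClosed L] [Algebra A L] [FaithfulSMul A L] {I : Ideal (MvPolynomial τ A)}
    {h : MvPolynomial τ A} (H : ∀ x : τ → L, (∀ q ∈ I, aeval x q = 0) → aeval x h = 0) :
    ∃ c : A, c ≠ 0 ∧ ∃ N : ℕ, C c * h ^ N ∈ I := by
  let K := FractionRing A
  let _ : Algebra K L := FractionRing.liftAlgebra A L
  let φ : MvPolynomial τ A →+* MvPolynomial τ K := map (algebraMap A K)
  let _ : Algebra (MvPolynomial τ A) (MvPolynomial τ K) := φ.toAlgebra
  let S := (nonZeroDivisors A).map (C (σ := τ))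
  have : IsLocalization S (MvPolynomial τ K) := isLocalization (nonZeroDivisors A) K
  have hrad : φ h ∈ (I.map φ).radical := by
    rw [← vanishingIdeal_zeroLocus_eq_radical (K := L)]
    refine fun x hx => (aeval_map_algebraMap K x h).trans (H x fun q hq => ?_)
    exact (aeval_map_algebraMap K x q).symm.trans (hx _ (Ideal.mem_map_of_mem φ hq))
  obtain ⟨N, hN⟩ := hrad
  rw [← map_pow] at hN
  obtain ⟨⟨a, ⟨_, c, hc, rfl⟩⟩, hac⟩ :=
    (IsLocalization.mem_map_algebraMap_iff S (MvPolynomial τ K)).mp hN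
  have hac' : φ (C c * h ^ N) = φ a := by
    rw [mul_comm, map_mul]
    exact hac
  refine ⟨c, nonZeroDivisors.ne_zero hc, N, ?_⟩
  rw [map_injective _ (IsFractionRing.injective A K) hac']
  exact a.2

theorem exists_forall_aeval_eq_zero_of_forall_aeval_eq_zero [Finite τ] {E : Type*} (L : Type*)
    [Field L] [IsAlgClosed L] [Algebra A L] [FaithfulSMul A L] {v : E → MvPolynomial τ A}
    {h : MvPolynomial τ A} (H : ∀ x : τ → L, (∀ e, aeval x (v e) = 0) → aeval x h = 0)
    {F : Type*} [CommRing F] (Ω : Type*) [CommRing Ω] [IsReduced Ω] [Algebra F Ω] :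
    ∃ c : A, c ≠ 0 ∧ ∀ φ : A →+* F, IsUnit (φ c) →
      ∀ x : τ → Ω, (∀ e, aeval x (map φ (v e)) = 0) → aeval x (map φ h) = 0 := by
  obtain ⟨c, hc, N, hN⟩ := exists_C_mul_pow_mem_of_forall_aeval_eq_zero L
    fun x hx => H x ((forall_mem_span_range_aeval_eq_zero_iff v x).mp hx)
  refine ⟨c, hc, fun φ hφ x hx => ?_⟩
  have hmem := Ideal.mem_map_of_mem (map φ) hN
  rw [map_span_range] at hmem
  have hzero := (forall_mem_span_range_aeval_eq_zero_iff _ x).mpr hx _ hmem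
  rw [map_mul, map_mul, map_pow, map_pow, map_C, aeval_C] at hzero
  exact eq_zero_of_pow_eq_zero ((hφ.map (algebraMap F Ω)).mul_right_eq_zero.mp hzero)

variable [Fintype τ] [DecidableEq τ] {v : τ → MvPolynomial τ A}

theorem exists_C_mem_span_sup_span_jacobianDet (L : Type*) [Field L] [IsAlgClosed L] [Algebra A L]
    [FaithfulSMul A L]
    (hv : ∀ x : τ → L, (∀ e, aeval x (v e) = 0) → aeval x (jacobianDet v) ≠ 0) :
    ∃ c : A, c ≠ 0 ∧ C c ∈ Ideal.span (Set.range v) ⊔ Ideal.span {jacobianDet v} := by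
  obtain ⟨c, hc, N, hmem⟩ := exists_C_mul_pow_mem_of_forall_aeval_eq_zero (h := 1)
    (I := Ideal.span (Set.range v) ⊔ Ideal.span {jacobianDet v}) L fun x hx =>
      absurd (hx _ (Ideal.mem_sup_right (Ideal.mem_span_singleton_self _))) <| hv x <|
        (forall_mem_span_range_aeval_eq_zero_iff v x).mp fun q hq => hx q (Ideal.mem_sup_left hq)
  rw [one_pow, mul_one] at hmem
  exact ⟨c, hc, hmem⟩

theorem rank_quotient_span_lt_aleph0 {c : A} (hc : c ≠ 0)
    (hmem : C c ∈ Ideal.span (Set.range v) ⊔ Ideal.span {jacobianDet v}) :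
    Module.rank A (MvPolynomial τ A ⧸ Ideal.span (Set.range v)) < Cardinal.aleph0 := by
  let K := FractionRing A
  have := etale_quotient_map_of_isUnit hmem (φ := algebraMap A K) <|
    isUnit_iff_ne_zero.mpr <| (map_ne_zero_iff _ (IsFractionRing.injective A K)).mpr hc
  have := Algebra.FormallyUnramified.finite_of_free K
    (MvPolynomial τ K ⧸ (Ideal.span (Set.range v)).map (map (algebraMap A K)))
  have : Module.Finite K (K ⊗[A] (MvPolynomial τ A ⧸ Ideal.span (Set.range v))) :=
    .equiv (tensorMvPolynomialQuotientEquiv K (Ideal.span (Set.range v))).symm.toLinearEquiv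
  rw [← (TensorProduct.isBaseChange A _ K).rank_eq]
  exact Module.rank_lt_aleph0 K _

theorem exists_forall_etale_and_finrank_eq (L : Type*) [Field L] [IsAlgClosed L] [Algebra A L]
    [FaithfulSMul A L]
    (hv : ∀ x : τ → L, (∀ e, aeval x (v e) = 0) → aeval x (jacobianDet v) ≠ 0)
    (F : Type*) [Field F] :
    ∃ c : A, c ≠ 0 ∧ ∃ g : ℕ, ∀ φ : A →+* F, φ c ≠ 0 →
      Algebra.Etale F (MvPolynomial τ F ⧸ (Ideal.span (Set.range v)).map (map φ)) ∧
        Module.finrank F (MvPolynomial τ F ⧸ (Ideal.span (Set.range v)).map (map φ)) = g := by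
  obtain ⟨c₁, hc₁, hmem⟩ := exists_C_mem_span_sup_span_jacobianDet L hv
  obtain ⟨c₂, hc₂, hfree⟩ :=
    exists_localizationAway_tensor_free _ (rank_quotient_span_lt_aleph0 hc₁ hmem)
  let B := MvPolynomial τ A ⧸ Ideal.span (Set.range v)
  refine ⟨c₁ * c₂, mul_ne_zero hc₁ hc₂,
    Module.finrank (Localization.Away c₂) (Localization.Away c₂ ⊗[A] B), fun φ hφ => ?_⟩
  rw [map_mul, mul_ne_zero_iff] at hφ
  refine ⟨etale_quotient_map_of_isUnit hmem hφ.1.isUnit, ?_⟩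
  let _ : Algebra A F := φ.toAlgebra
  let e := tensorMvPolynomialQuotientEquiv F (Ideal.span (Set.range v))
  exact e.toLinearEquiv.finrank_eq.symm.trans
    (finrank_tensor_eq_of_isUnit B (c := c₂) hφ.2.isUnit)

end SpreadingOut

section Transversality

open scoped KaehlerDifferential

variable {k : Type*} [CommRing k]

theorem exists_derivation_algebraMap_X_eq {σ L : Type*} [CommRing L] [Algebra k L]
    [Algebra (MvPolynomial σ k) L] [IsScalarTower k (MvPolynomial σ k) L]
    [Algebra.FormallyEtale (MvPolynomial σ k) L] (a : σ → L) :
    ∃ D : Derivation k L L, ∀ s, D (algebraMap (MvPolynomial σ k) L (X s)) = a s := by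
  let A := MvPolynomial σ k
  let e := KaehlerDifferential.tensorKaehlerEquivOfFormallyEtale k A L
  let ψ : L ⊗[A] Ω[A⁄k] →ₗ[L] L :=
    (mkDerivation k a : Derivation k A L).liftKaehlerDifferential.liftBaseChange L
  refine ⟨(ψ ∘ₗ e.symm.toLinearMap).compDer (KaehlerDifferential.D k L), fun s => ?_⟩
  change ψ (e.symm (KaehlerDifferential.D k L (algebraMap A L (X s)))) = a s
  rw [KaehlerDifferential.tensorKaehlerEquivOfFormallyEtale_symm_D_algebraMap,
    LinearMap.liftBaseChange_tmul, one_smul, Derivation.liftKaehlerDifferential_comp_D,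
    mkDerivation_X]

/-- The value at `x` of the Jacobian matrix of the polynomials `f m`. -/
noncomputable def jacobianMatrixAt {ν ρ L : Type*} [CommRing L] [Algebra k L]
    (f : ρ → MvPolynomial ν k) (x : ν → L) : Matrix ρ ν L :=
  Matrix.of fun m j => aeval x (pderiv j (f m))

variable {ι κ ν ρ L : Type*} [Fintype ν]

section Derivation

variable [CommRing L] [Algebra k L] (D : Derivation k L L)

theorem derivation_aeval (x : ν → L) (p : MvPolynomial ν k) :
    D (aeval x p) = ∑ j, aeval x (pderiv j p) * D (x j) := by
  classical
  induction p using MvPolynomial.induction_on with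
  | C a => simp
  | add p q hp hq => simp [hp, hq, add_mul, Finset.sum_add_distrib]
  | mul_X p j hp =>
    simp [hp, pderiv_X, Pi.single_apply, add_mul, Finset.sum_add_distrib, Finset.mul_sum, mul_assoc,
      apply_ite, ite_mul]

theorem derivation_comp_aeval (f : ρ → MvPolynomial ν k) (x : ν → L) :
    (D ∘ fun m => aeval x (f m)) = (jacobianMatrixAt f x).mulVec (D ∘ x) :=
  funext fun m => derivation_aeval D x (f m)

theorem derivation_comp_mulVec (M : Matrix ι ν L) (y : ν → L) :
    D ∘ M.mulVec y = (M.map D).mulVec y + M.mulVec (D ∘ y) := by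
  ext m
  simp [Matrix.mulVec, dotProduct, Finset.sum_add_distrib, mul_comm, add_comm]

end Derivation

variable [Fintype ρ]

/-- The points `x` with `Θ · x = 1` and `Λ · f(x) = 0`. -/
def linearSection [CommRing L] [Algebra k L] (Θ : Matrix ι ν L) (Λ : Matrix κ ρ L)
    (f : ρ → MvPolynomial ν k) : Set (ν → L) :=
  {x | Θ.mulVec x = 1 ∧ (Λ.mulVec fun m => aeval x (f m)) = 0}

open Matrix in
theorem mem_linearSection_fromRows_iff [CommRing L] [Algebra k L] {Θ : Matrix ι ν L}
    {Λ : Matrix κ ρ L} {μ : ρ → L} {f : ρ → MvPolynomial ν k} {x : ν → L} :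
    x ∈ linearSection Θ (fromRows Λ (replicateRow Unit μ)) f ↔
      x ∈ linearSection Θ Λ f ∧ μ ⬝ᵥ (fun m => aeval x (f m)) = 0 := by
  simp [linearSection, fromRows_mulVec, funext_iff, and_assoc, mulVec]

variable [Field L] [Algebra k L] {Θ : Matrix ι ν L} {Λ : Matrix κ ρ L} {f : ρ → MvPolynomial ν k}
  {x : ν → L}

open Matrix in
theorem surjective_jacobian_mulVec_of_mem_linearSection
    (hD : ∀ a b, ∃ D : Derivation k L L, Θ.map D = a ∧ Λ.map D = b) (hx : x ∈ linearSection Θ Λ f)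
    {m : ρ} (hm : aeval x (f m) ≠ 0) :
    Function.Surjective (fromRows Θ (Λ * jacobianMatrixAt f x)).mulVec := by
  classical
  obtain ⟨hΘ, hΛ⟩ := hx
  intro a
  obtain ⟨D, hDΘ, hDΛ⟩ := hD (of fun i => a (.inl i) • Θ i)
    (of fun i => Pi.single m (a (.inr i) / aeval x (f m)))
  have hΘa : (Θ.map D).mulVec x = a ∘ Sum.inl := by
    rw [hDΘ]
    ext i
    have hΘi : Θ i ⬝ᵥ x = 1 := congrFun hΘ i
    exact (smul_dotProduct (a (.inl i)) (Θ i) x).trans <| by rw [hΘi, smul_eq_mul, mul_one]; rfl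
  have hΛa : ((Λ.map D).mulVec fun m => aeval x (f m)) = a ∘ Sum.inr := by
    rw [hDΛ]
    ext i
    simp [mulVec, hm]
  have hΘ' := derivation_comp_mulVec D Θ x
  have hΛ' := derivation_comp_mulVec D Λ fun m => aeval x (f m)
  have hD1 : D ∘ (1 : ι → L) = 0 := funext fun _ => D.map_one_eq_zero
  have hD0 : D ∘ (0 : κ → L) = 0 := funext fun _ => D.map_zero
  rw [hΘ, hD1, hΘa] at hΘ'
  rw [hΛ, hD0, hΛa, derivation_comp_aeval, mulVec_mulVec] at hΛ'
  refine ⟨-(D ∘ x), ?_⟩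
  rw [fromRows_mulVec, mulVec_neg, mulVec_neg, ← eq_neg_of_add_eq_zero_left hΘ'.symm,
    ← eq_neg_of_add_eq_zero_left hΛ'.symm, Sum.elim_comp_inl_inr]

theorem card_add_card_le_of_mem_linearSection [Fintype ι] [Fintype κ]
    (hD : ∀ a b, ∃ D : Derivation k L L, Θ.map D = a ∧ Λ.map D = b) (hx : x ∈ linearSection Θ Λ f)
    {m : ρ} (hm : aeval x (f m) ≠ 0) : Fintype.card ι + Fintype.card κ ≤ Fintype.card ν := by
  rw [← Fintype.card_sum]
  exact card_le_of_surjective L (Matrix.mulVecLin _)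
    (surjective_jacobian_mulVec_of_mem_linearSection hD hx hm)

theorem isUnit_det_jacobian_of_mem_linearSection [DecidableEq ν] (e : ν ≃ ι ⊕ κ)
    (hD : ∀ a b, ∃ D : Derivation k L L, Θ.map D = a ∧ Λ.map D = b) (hx : x ∈ linearSection Θ Λ f)
    {m : ρ} (hm : aeval x (f m) ≠ 0) :
    IsUnit ((Matrix.fromRows Θ (Λ * jacobianMatrixAt f x)).submatrix e id).det := by
  rw [← Matrix.isUnit_iff_isUnit_det, ← Matrix.mulVec_surjective_iff_isUnit]
  exact (e.arrowCongr (.refl L)).symm.surjective.comp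
    (surjective_jacobian_mulVec_of_mem_linearSection hD hx hm)

end Transversality

section Rabinowitsch

variable {E ν S : Type*} [CommRing S]

/-- The system `v` together with the equation `1 - h T = 0` in the additional variable
`T = X (Sum.inr ())`, whose solutions are the zeros of `v` at which `h` is invertible. -/
noncomputable def rabinowitsch (v : E → MvPolynomial ν S) (h : MvPolynomial ν S) :
    E ⊕ Unit → MvPolynomial (ν ⊕ Unit) S :=
  Sum.elim (fun e => rename Sum.inl (v e)) fun _ => 1 - rename Sum.inl h * X (Sum.inr ())

theorem map_rabinowitsch {S' : Type*} [CommRing S'] (φ : S →+* S') (v : E → MvPolynomial ν S)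
    (h : MvPolynomial ν S) (e : E ⊕ Unit) :
    map φ (rabinowitsch v h e) = rabinowitsch (fun e => map φ (v e)) (map φ h) e := by
  cases e <;> simp [rabinowitsch, map_rename]

theorem range_rabinowitsch_comp_equiv {E' : Type*} (e : E' ≃ E) (v : E → MvPolynomial ν S)
    (h : MvPolynomial ν S) :
    Set.range (rabinowitsch (v ∘ e) h) = Set.range (rabinowitsch v h) := by
  rw [← EquivLike.range_comp (rabinowitsch v h) (e.sumCongr (.refl Unit))]
  congr 1
  ext1 t
  cases t <;> rfl

theorem pderiv_inr_rename_inl (p : MvPolynomial ν S) (u : Unit) :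
    pderiv (Sum.inr u) (rename Sum.inl p : MvPolynomial (ν ⊕ Unit) S) = 0 := by
  refine pderiv_eq_zero_of_notMem_vars fun hu => ?_
  classical
  obtain ⟨j, -, hj⟩ := Finset.mem_image.mp (vars_rename _ _ hu)
  exact Sum.inl_ne_inr hj

theorem jacobianDet_rabinowitsch [Fintype ν] [DecidableEq ν] (v : ν → MvPolynomial ν S)
    (h : MvPolynomial ν S) :
    jacobianDet (rabinowitsch v h) = rename Sum.inl (jacobianDet v) * -rename Sum.inl h := by
  have blocks : (Matrix.of fun e t => pderiv t (rabinowitsch v h e)) =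
      Matrix.fromBlocks ((rename Sum.inl).mapMatrix (Matrix.of fun e t => pderiv t (v e))) 0
        (Matrix.of fun _ j => pderiv (Sum.inl j) (1 - rename Sum.inl h * X (Sum.inr ())))
        (Matrix.of fun _ _ => -rename Sum.inl h) := by
    ext1 e t
    rcases e with e | u <;> rcases t with t | u'
    · exact pderiv_rename Sum.inl_injective t (v e)
    · exact pderiv_inr_rename_inl (v e) u'
    · rfl
    · simp [rabinowitsch, pderiv_inr_rename_inl]
  rw [jacobianDet, blocks, Matrix.det_fromBlocks_zero₁₂, Matrix.det_unique (n := Unit),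
    jacobianDet, AlgHom.map_det, Matrix.of_apply]

variable {Ω : Type*} [Field Ω] [Algebra S Ω]

theorem forall_aeval_rabinowitsch_eq_zero_iff {v : E → MvPolynomial ν S} {h : MvPolynomial ν S}
    {x : ν ⊕ Unit → Ω} :
    (∀ e, aeval x (rabinowitsch v h e) = 0) ↔
      (∀ e, aeval (x ∘ Sum.inl) (v e) = 0) ∧ aeval (x ∘ Sum.inl) h * x (Sum.inr ()) = 1 := by
  simp [rabinowitsch, aeval_rename, sub_eq_zero, eq_comm (a := (1 : Ω))]

theorem aeval_jacobianDet_rabinowitsch_ne_zero [Fintype ν] [DecidableEq ν]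
    {v : ν → MvPolynomial ν S} {h : MvPolynomial ν S}
    (hv : ∀ x : ν → Ω, (∀ e, aeval x (v e) = 0) → aeval x h ≠ 0 → aeval x (jacobianDet v) ≠ 0)
    {x : ν ⊕ Unit → Ω} (hx : ∀ e, aeval x (rabinowitsch v h e) = 0) :
    aeval x (jacobianDet (rabinowitsch v h)) ≠ 0 := by
  obtain ⟨hxv, hxh⟩ := forall_aeval_rabinowitsch_eq_zero_iff.mp hx
  have hh := left_ne_zero_of_mul_eq_one hxh
  rw [jacobianDet_rabinowitsch, map_mul, map_neg, aeval_rename, aeval_rename]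
  exact mul_ne_zero (hv _ hxv hh) (neg_ne_zero.mpr hh)

theorem bijOn_zeroLocus_span_rabinowitsch {k : Type*} [Field k] [Algebra k Ω]
    (v : E → MvPolynomial ν k) (h : MvPolynomial ν k) :
    Set.BijOn (· ∘ Sum.inl) (zeroLocus Ω (Ideal.span (Set.range (rabinowitsch v h))))
      {x | (∀ e, aeval x (v e) = 0) ∧ aeval x h ≠ 0} := by
  have mem_iff {x : ν ⊕ Unit → Ω} : x ∈ zeroLocus Ω (Ideal.span (Set.range (rabinowitsch v h))) ↔
      (∀ e, aeval (x ∘ Sum.inl) (v e) = 0) ∧ aeval (x ∘ Sum.inl) h * x (Sum.inr ()) = 1 :=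
    (forall_mem_span_range_aeval_eq_zero_iff _ x).trans forall_aeval_rabinowitsch_eq_zero_iff
  refine ⟨fun x hx => ?_, fun x hx y hy hxy => ?_, fun x hx => ?_⟩
  · exact ⟨(mem_iff.mp hx).1, left_ne_zero_of_mul_eq_one (mem_iff.mp hx).2⟩
  · have hT : x (Sum.inr ()) = y (Sum.inr ()) := by
      have hxT := (mem_iff.mp hx).2
      have hyT := (mem_iff.mp hy).2
      rw [← show x ∘ Sum.inl = y ∘ Sum.inl from hxy] at hyT
      exact mul_left_cancel₀ (left_ne_zero_of_mul_eq_one hxT) (hxT.trans hyT.symm)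
    ext (j | _)
    · exact congrFun hxy j
    · exact hT
  · exact ⟨Sum.elim x fun _ => (aeval x h)⁻¹, mem_iff.mpr ⟨hx.1, mul_inv_cancel₀ hx.2⟩, rfl⟩

end Rabinowitsch

section Combination

variable {k ν ρ S : Type*} [CommRing k] [Fintype ρ] [CommRing S] [Algebra k S]

/-- The linear combination `∑ a m • f m`, with the coefficients of `f` extended to `S`. -/
noncomputable def combination (a : ρ → S) (f : ρ → MvPolynomial ν k) : MvPolynomial ν S :=
  ∑ m, C (a m) * map (algebraMap k S) (f m)

variable (μ : ρ → S) (f : ρ → MvPolynomial ν k)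

theorem map_combination {S' : Type*} [CommRing S'] [Algebra k S'] (φ : S →ₐ[k] S') :
    map φ (combination μ f) = combination (φ ∘ μ) f := by
  simp [combination, map_map, φ.comp_algebraMap]

theorem aeval_combination {L : Type*} [CommRing L] [Algebra k L] [Algebra S L]
    [IsScalarTower k S L] (x : ν → L) :
    aeval x (combination μ f) = (algebraMap S L ∘ μ) ⬝ᵥ fun m => aeval x (f m) := by
  simp [combination, dotProduct, aeval_map_algebraMap]

theorem aeval_pderiv_combination {L : Type*} [CommRing L] [Algebra k L] [Algebra S L]
    [IsScalarTower k S L] (x : ν → L) (j : ν) :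
    aeval x (pderiv j (combination μ f)) =
      (algebraMap S L ∘ μ) ⬝ᵥ fun m => jacobianMatrixAt f x m j := by
  simp [combination, dotProduct, pderiv_map, aeval_map_algebraMap, jacobianMatrixAt]

end Combination

section SectionSystem

variable {k ι κ ν ρ S : Type*} [CommRing k] [Fintype ν] [Fintype ρ] [CommRing S] [Algebra k S]

/-- The equations `Θ · x = 1` and `Λ · f = 0`, as polynomials over a `k`-algebra containing the
entries of `Θ` and `Λ`. -/
noncomputable def sectionSystem (Θ : Matrix ι ν S) (Λ : Matrix κ ρ S)
    (f : ρ → MvPolynomial ν k) : ι ⊕ κ → MvPolynomial ν S :=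
  Sum.elim (fun i => ∑ j, C (Θ i j) * X j - 1) fun i => combination (Λ i) f

/-- The ideal generated by `Θ · x - 1`, `Λ · f` and `1 - (μ · f) T`, where `T = X (Sum.inr ())`. -/
noncomputable def saturationIdeal (Θ : Matrix ι ν S) (Λ : Matrix κ ρ S) (μ : ρ → S)
    (f : ρ → MvPolynomial ν k) : Ideal (MvPolynomial (ν ⊕ Unit) S) :=
  Ideal.span (Set.range (rabinowitsch (sectionSystem Θ Λ f) (combination μ f)))

variable (Θ : Matrix ι ν S) (Λ : Matrix κ ρ S) (μ : ρ → S) (f : ρ → MvPolynomial ν k)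

section Map

variable {S' : Type*} [CommRing S'] [Algebra k S'] (φ : S →ₐ[k] S')

theorem map_sectionSystem (e : ι ⊕ κ) :
    map φ (sectionSystem Θ Λ f e) = sectionSystem (Θ.map φ) (Λ.map φ) f e := by
  cases e
  · simp [sectionSystem]
  · exact map_combination _ f φ

theorem map_saturationIdeal :
    (saturationIdeal Θ Λ μ f).map (map φ) = saturationIdeal (Θ.map φ) (Λ.map φ) (φ ∘ μ) f := by
  simp only [saturationIdeal, map_span_range, map_rabinowitsch, map_sectionSystem, map_combination]

end Map

section Aeval

variable {L : Type*} [CommRing L] [Algebra k L] [Algebra S L] [IsScalarTower k S L]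

theorem forall_aeval_sectionSystem_eq_zero_iff (x : ν → L) :
    (∀ e, aeval x (sectionSystem Θ Λ f e) = 0) ↔
      x ∈ linearSection (Θ.map (algebraMap S L)) (Λ.map (algebraMap S L)) f := by
  simp only [Sum.forall, sectionSystem, Sum.elim_inl, Sum.elim_inr, aeval_combination,
    linearSection, Set.mem_ofPred_eq, funext_iff]
  simp [sub_eq_zero, Matrix.mulVec, dotProduct]

theorem aeval_jacobianDet_sectionSystem [DecidableEq ν] (e : ν ≃ ι ⊕ κ) (x : ν → L) :
    aeval x (jacobianDet (sectionSystem Θ Λ f ∘ e)) =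
      ((Matrix.fromRows (Θ.map (algebraMap S L))
        (Λ.map (algebraMap S L) * jacobianMatrixAt f x)).submatrix e id).det := by
  rw [jacobianDet, AlgHom.map_det]
  congr 1
  ext t j
  simp only [AlgHom.mapMatrix_apply, Matrix.map_apply, Matrix.of_apply, Function.comp_apply,
    Matrix.submatrix_apply, id]
  rcases e t with i | i
  · simp [sectionSystem, pderiv_X, Pi.single_apply]
  · exact aeval_pderiv_combination ..

end Aeval

end SectionSystem

section Generic

variable {k F Ω A L : Type*} [CommRing k] [Field F] [Algebra k F] [Field Ω] [Algebra k Ω]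
  [Algebra F Ω] [IsScalarTower k F Ω] [CommRing A] [IsDomain A] [Algebra k A]
  [Field L] [IsAlgClosed L] [Algebra A L] [FaithfulSMul A L] [Algebra k L] [IsScalarTower k A L]
  {ι κ ν ρ : Type*} [Fintype ν] [Fintype ρ] {Θ : Matrix ι ν A} {Λ : Matrix κ ρ A}

theorem exists_forall_etale_quotient_saturationIdeal_and_finrank_eq (e : ν ≃ ι ⊕ κ)
    (hD : ∀ a b, ∃ D : Derivation k L L,
      (Θ.map (algebraMap A L)).map D = a ∧ (Λ.map (algebraMap A L)).map D = b)
    (μ : ρ → A) (f : ρ → MvPolynomial ν k) :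
    ∃ c : A, c ≠ 0 ∧ ∃ g : ℕ, ∀ φ : A →ₐ[k] F, φ c ≠ 0 →
      Algebra.Etale F (MvPolynomial (ν ⊕ Unit) F ⧸
          saturationIdeal (Θ.map φ) (Λ.map φ) (φ ∘ μ) f) ∧
        Module.finrank F (MvPolynomial (ν ⊕ Unit) F ⧸
          saturationIdeal (Θ.map φ) (Λ.map φ) (φ ∘ μ) f) = g := by
  classical
  have hv (x : ν → L) (hx : ∀ t, aeval x ((sectionSystem Θ Λ f ∘ e) t) = 0)
      (hμ : aeval x (combination μ f) ≠ 0) :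
      aeval x (jacobianDet (sectionSystem Θ Λ f ∘ e)) ≠ 0 := by
    rw [aeval_combination] at hμ
    obtain ⟨m, -, hm⟩ := Finset.exists_ne_zero_of_sum_ne_zero hμ
    rw [aeval_jacobianDet_sectionSystem]
    exact (isUnit_det_jacobian_of_mem_linearSection e hD
      ((forall_aeval_sectionSystem_eq_zero_iff ..).mp (e.forall_congr_right.mp hx))
      (right_ne_zero_of_mul hm)).ne_zero
  obtain ⟨c, hc, g, hφ⟩ := exists_forall_etale_and_finrank_eq L
    (fun _ => aeval_jacobianDet_rabinowitsch_ne_zero hv) F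
  refine ⟨c, hc, g, fun φ hφc => ?_⟩
  rw [← map_saturationIdeal, saturationIdeal, ← range_rabinowitsch_comp_equiv e]
  exact hφ φ hφc

variable (Ω) in
theorem exists_forall_linearSection_subset [Fintype ι] [Fintype κ]
    (hcard : Fintype.card ν < Fintype.card ι + Fintype.card κ)
    (hD : ∀ a b, ∃ D : Derivation k L L,
      (Θ.map (algebraMap A L)).map D = a ∧ (Λ.map (algebraMap A L)).map D = b)
    (f : ρ → MvPolynomial ν k) :
    ∃ c : A, c ≠ 0 ∧ ∀ φ : A →ₐ[k] F, φ c ≠ 0 →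
      linearSection ((Θ.map φ).map (algebraMap F Ω)) ((Λ.map φ).map (algebraMap F Ω)) f ⊆
        {x | ∀ m, aeval x (f m) = 0} := by
  have hzero (m : ρ) (x : ν → L) (hx : ∀ e, aeval x (sectionSystem Θ Λ f e) = 0) :
      aeval x (map (algebraMap k A) (f m)) = 0 := by
    by_contra hm
    rw [aeval_map_algebraMap] at hm
    exact hcard.not_ge <| card_add_card_le_of_mem_linearSection hD
      ((forall_aeval_sectionSystem_eq_zero_iff ..).mp hx) hm
  choose c hc hφ using fun m =>
    exists_forall_aeval_eq_zero_of_forall_aeval_eq_zero L (hzero m) (F := F) Ω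
  refine ⟨∏ m, c m, Finset.prod_ne_zero_iff.mpr fun m _ => hc m, fun φ hφc x hx m => ?_⟩
  rw [map_prod, Finset.prod_ne_zero_iff] at hφc
  have hzero_x := hφ m φ (hφc m (Finset.mem_univ m)).isUnit x <| by
    simpa only [← map_sectionSystem] using (forall_aeval_sectionSystem_eq_zero_iff ..).mpr hx
  simpa [map_map, φ.comp_algebraMap, aeval_map_algebraMap] using hzero_x

theorem finite_linearSection_diff_and_ncard_eq_finrank [IsSepClosed Ω] {Θ : Matrix ι ν F}
    {Λ : Matrix κ ρ F} {μ : ρ → F} {f : ρ → MvPolynomial ν k}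
    [Algebra.FormallyUnramified F (MvPolynomial (ν ⊕ Unit) F ⧸ saturationIdeal Θ Λ μ f)]
    (hμ : ∀ x ∈ linearSection (Θ.map (algebraMap F Ω)) (Λ.map (algebraMap F Ω)) f,
      (algebraMap F Ω ∘ μ) ⬝ᵥ (fun m => aeval x (f m)) = 0 → ∀ m, aeval x (f m) = 0) :
    (linearSection (Θ.map (algebraMap F Ω)) (Λ.map (algebraMap F Ω)) f \
        {x | ∀ m, aeval x (f m) = 0}).Finite ∧
      (linearSection (Θ.map (algebraMap F Ω)) (Λ.map (algebraMap F Ω)) f \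
        {x | ∀ m, aeval x (f m) = 0}).ncard =
      Module.finrank F (MvPolynomial (ν ⊕ Unit) F ⧸ saturationIdeal Θ Λ μ f) := by
  have hset : linearSection (Θ.map (algebraMap F Ω)) (Λ.map (algebraMap F Ω)) f \
      {x | ∀ m, aeval x (f m) = 0} = {x | (∀ e, aeval x (sectionSystem Θ Λ f e) = 0) ∧
        aeval x (combination μ f) ≠ 0} := by
    ext x
    simp only [Set.mem_sdiff, Set.mem_ofPred_eq, forall_aeval_sectionSystem_eq_zero_iff,
      aeval_combination]
    refine and_congr_right fun hx => not_congr ⟨fun h => ?_, hμ x hx⟩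
    simp only [h]
    exact dotProduct_zero _
  have hbij := bijOn_zeroLocus_span_rabinowitsch (Ω := Ω) (sectionSystem Θ Λ f) (combination μ f)
  obtain ⟨hfin, hcard⟩ := zeroLocus_finite_and_ncard_eq_finrank (saturationIdeal Θ Λ μ f) Ω
  rw [hset]
  exact ⟨hbij.finite_iff_finite.mp hfin, hbij.ncard_eq.symm.trans hcard⟩

variable (Ω) in
open Matrix in
theorem exists_forall_finrank_eq_and_ncard_eq [IsSepClosed Ω] [Fintype ι] [Fintype κ]
    (hcard : Fintype.card ι + Fintype.card κ = Fintype.card ν) {μ : ρ → A}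
    (hD : ∀ a b c, ∃ D : Derivation k L L, (Θ.map (algebraMap A L)).map D = a ∧
      (Λ.map (algebraMap A L)).map D = b ∧ D ∘ algebraMap A L ∘ μ = c)
    (f : ρ → MvPolynomial ν k) :
    ∃ c : A, c ≠ 0 ∧ ∃ g : ℕ, ∀ φ : A →ₐ[k] F, φ c ≠ 0 →
      Module.Finite F (MvPolynomial (ν ⊕ Unit) F ⧸
          saturationIdeal (Θ.map φ) (Λ.map φ) (φ ∘ μ) f) ∧
        Module.finrank F (MvPolynomial (ν ⊕ Unit) F ⧸
          saturationIdeal (Θ.map φ) (Λ.map φ) (φ ∘ μ) f) = g ∧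
        (linearSection ((Θ.map φ).map (algebraMap F Ω)) ((Λ.map φ).map (algebraMap F Ω)) f \
          {x | ∀ m, aeval x (f m) = 0}).Finite ∧
        (linearSection ((Θ.map φ).map (algebraMap F Ω)) ((Λ.map φ).map (algebraMap F Ω)) f \
          {x | ∀ m, aeval x (f m) = 0}).ncard = g := by
  have e : ν ≃ ι ⊕ κ := Fintype.equivOfCardEq (by rw [Fintype.card_sum, hcard])
  have hDΛ (a b) : ∃ D : Derivation k L L,
      (Θ.map (algebraMap A L)).map D = a ∧ (Λ.map (algebraMap A L)).map D = b :=
    let ⟨D, hΘ, hΛ, _⟩ := hD a b 0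
    ⟨D, hΘ, hΛ⟩
  have hDμ (a b) : ∃ D : Derivation k L L, (Θ.map (algebraMap A L)).map D = a ∧
      ((fromRows Λ (replicateRow Unit μ)).map (algebraMap A L)).map D = b := by
    obtain ⟨D, hΘ, hΛ, hμ⟩ := hD a b.toRows₁ (b (.inr ()))
    refine ⟨D, hΘ, ?_⟩
    ext (i | _) m
    · exact congrFun₂ hΛ i m
    · exact congrFun hμ m
  obtain ⟨c₁, hc₁, g, hg⟩ :=
    exists_forall_etale_quotient_saturationIdeal_and_finrank_eq (F := F) e hDΛ μ f
  obtain ⟨c₂, hc₂, hbase⟩ := exists_forall_linearSection_subset (F := F) Ω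
    (by rw [Fintype.card_sum, Fintype.card_unit]; lia) hDμ f
  refine ⟨c₁ * c₂, mul_ne_zero hc₁ hc₂, g, fun φ hφ => ?_⟩
  rw [map_mul, mul_ne_zero_iff] at hφ
  obtain ⟨_, hfinrank⟩ := hg φ hφ.1
  have hmap : ((fromRows Λ (replicateRow Unit μ)).map φ).map (algebraMap F Ω) =
      fromRows ((Λ.map φ).map (algebraMap F Ω))
        (replicateRow Unit (algebraMap F Ω ∘ φ ∘ μ)) := by
    ext (i | _) m <;> rfl
  have hbase' := hbase φ hφ.2
  rw [hmap] at hbase'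
  obtain ⟨hfin, hncard⟩ := finite_linearSection_diff_and_ncard_eq_finrank (Θ := Θ.map φ)
    (Λ := Λ.map φ) (μ := φ ∘ μ) (f := f) (Ω := Ω) fun x hx hx0 =>
      hbase' (mem_linearSection_fromRows_iff.mpr ⟨hx, hx0⟩)
  exact ⟨Algebra.FormallyUnramified.finite_of_free F _, hfinrank, hfin, hncard.trans hfinrank⟩

end Generic

theorem exists_isAlgClosed_formallyEtale.{u} (A : Type u) [CommRing A] [IsDomain A] [CharZero A] :
    ∃ (L : Type u) (_ : Field L) (_ : Algebra A L),
      IsAlgClosed L ∧ FaithfulSMul A L ∧ Algebra.FormallyEtale A L := by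
  let K := FractionRing A
  let L := AlgebraicClosure K
  have : Algebra.FormallyEtale A K := .of_isLocalization (nonZeroDivisors A)
  have : Algebra.FormallyEtale K L := .of_isSeparable K L
  exact ⟨L, inferInstance, inferInstance, inferInstance, .trans A K L, .comp A K L⟩

theorem generic_saturation_count_general {k F Ω : Type*} [CommRing k] [IsDomain k] [CharZero k]
    [Field F] [Algebra k F] [Field Ω] [IsSepClosed Ω] [Algebra k Ω] [Algebra F Ω]
    [IsScalarTower k F Ω]
    {ι κ ν ρ : Type*} [Fintype ι] [Fintype κ] [Fintype ν] [Fintype ρ]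
    (hcard : Fintype.card ι + Fintype.card κ = Fintype.card ν) (f : ρ → MvPolynomial ν k) :
    ∃ c : MvPolynomial ((ι × ν) ⊕ (κ × ρ) ⊕ ρ) k, c ≠ 0 ∧
      ∃ g : ℕ, ∀ (Θ : Matrix ι ν F) (Λ : Matrix κ ρ F) (μ : ρ → F),
        aeval (Sum.elim (fun p => Θ p.1 p.2) (Sum.elim (fun p => Λ p.1 p.2) μ)) c ≠ 0 →
          Module.Finite F (MvPolynomial (ν ⊕ Unit) F ⧸ saturationIdeal Θ Λ μ f) ∧
          Module.finrank F (MvPolynomial (ν ⊕ Unit) F ⧸ saturationIdeal Θ Λ μ f) = g ∧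
          (linearSection (Θ.map (algebraMap F Ω)) (Λ.map (algebraMap F Ω)) f \
            {x | ∀ m, aeval x (f m) = 0}).Finite ∧
          (linearSection (Θ.map (algebraMap F Ω)) (Λ.map (algebraMap F Ω)) f \
            {x | ∀ m, aeval x (f m) = 0}).ncard = g := by
  let A := MvPolynomial ((ι × ν) ⊕ (κ × ρ) ⊕ ρ) k
  let Θ₀ : Matrix ι ν A := .of fun i j => X (.inl (i, j))
  let Λ₀ : Matrix κ ρ A := .of fun i m => X (.inr (.inl (i, m)))
  let μ₀ : ρ → A := fun m => X (.inr (.inr m))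
  obtain ⟨L, _, _, _, _, _⟩ := exists_isAlgClosed_formallyEtale A
  let _ : Algebra k L := .compHom L (algebraMap k A)
  have : IsScalarTower k A L := .of_algebraMap_eq fun _ => rfl
  have hD (a : Matrix ι ν L) (b : Matrix κ ρ L) (c : ρ → L) :
      ∃ D : Derivation k L L, (Θ₀.map (algebraMap A L)).map D = a ∧
        (Λ₀.map (algebraMap A L)).map D = b ∧ D ∘ algebraMap A L ∘ μ₀ = c := by
    obtain ⟨D, hD⟩ := exists_derivation_algebraMap_X_eq (k := k) (L := L)
      (Sum.elim (fun p : ι × ν => a p.1 p.2) (Sum.elim (fun p : κ × ρ => b p.1 p.2) c))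
    exact ⟨D, Matrix.ext fun i j => hD (.inl (i, j)), Matrix.ext fun i m => hD (.inr (.inl (i, m))),
      funext fun m => hD (.inr (.inr m))⟩
  obtain ⟨c, hc, g, h⟩ := exists_forall_finrank_eq_and_ncard_eq (F := F) Ω hcard hD f
  refine ⟨c, hc, g, fun Θ Λ μ hcΘ => ?_⟩
  let p := Sum.elim (fun p : ι × ν => Θ p.1 p.2) (Sum.elim (fun p : κ × ρ => Λ p.1 p.2) μ)
  have hX (s) : (aeval p : A →ₐ[k] F) (X s) = p s := aeval_X p s
  have hΘ : Θ₀.map (aeval p) = Θ := Matrix.ext fun i j => hX (.inl (i, j))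
  have hΛ : Λ₀.map (aeval p) = Λ := Matrix.ext fun i m => hX (.inr (.inl (i, m)))
  have hμ : (aeval p : A →ₐ[k] F) ∘ μ₀ = μ := funext fun m => hX (.inr (.inr m))
  have hcount := h (aeval p) hcΘ
  rwa [hΘ, hΛ, hμ] at hcount

theorem satIdeal_eq_saturationIdeal {n r : ℕ} (i : ℕ) (f : Fin r → MvPolynomial (Fin n) ℚ)
    (Θ : Matrix (Fin i) (Fin n) ℚ) (Λ : Matrix (Fin (n - i)) (Fin r) ℚ) (μ : Fin r → ℚ) :
    satIdeal i f Θ Λ μ = saturationIdeal Θ Λ μ f := by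
  have hsystem : rabinowitsch (sectionSystem Θ Λ f) (combination μ f) =
      Sum.elim
        (Sum.elim (fun k => ∑ j, C (Θ k j) * X (Sum.inl j) - 1)
          fun k => ∑ j, C (Λ k j) * rename Sum.inl (f j))
        fun _ => 1 - (∑ j, C (μ j) * rename Sum.inl (f j)) * X (Sum.inr ()) := by
    funext e
    rcases e with (k | k) | _ <;>
      simp [rabinowitsch, sectionSystem, combination, MvPolynomial.map_id]
  rw [satIdeal, saturationIdeal, hsystem, Set.Sum.elim_range, Set.Sum.elim_range, Set.range_const]

/-- Theorem 4.2 of the paper, affine version of Helmer's Thm. 4.1.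
There exist a nonzero polynomial `c` in the `i·n + (n−i)·r + r` parameter entries of
`(Θ,Λ,μ)` and `g_i ∈ ℕ` such that whenever `c(Θ,Λ,μ) ≠ 0`, the quotient
`ℚ[x₁,…,xₙ,T]/I_i(Θ,Λ,μ)` is a finite-dimensional `ℚ`-vector space of dimension exactly
`g_i`, and the set `{x ∈ ℂⁿ : Θ·x = 1, Λ·f(x) = 0} \ X` is finite with exactly `g_i`
elements. -/
theorem generic_saturation_count (n r : ℕ) (i : ℕ) (hi : i < n)
    (f : Fin r → MvPolynomial (Fin n) ℚ) :
    ∃ (c : MvPolynomial ((Fin i × Fin n) ⊕ (Fin (n - i) × Fin r) ⊕ Fin r) ℚ),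
      c ≠ 0 ∧
      ∃ gi : ℕ,
        ∀ (Θ : Matrix (Fin i) (Fin n) ℚ) (Λ : Matrix (Fin (n - i)) (Fin r) ℚ)
          (μ : Fin r → ℚ),
          eval (Sum.elim (fun p => Θ p.1 p.2)
              (Sum.elim (fun p => Λ p.1 p.2) μ)) c ≠ 0 →
            Module.Finite ℚ
                (MvPolynomial (Fin n ⊕ Unit) ℚ ⧸ satIdeal i f Θ Λ μ) ∧
              Module.finrank ℚ
                  (MvPolynomial (Fin n ⊕ Unit) ℚ ⧸ satIdeal i f Θ Λ μ) = gi ∧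
              ({x : Fin n → ℂ |
                    (∀ k : Fin i, ∑ j : Fin n, (Θ k j : ℂ) * x j = 1) ∧
                      ∀ k : Fin (n - i), ∑ j : Fin r, (Λ k j : ℂ) * aeval x (f j) = 0} \
                  {x : Fin n → ℂ | ∀ j : Fin r, aeval x (f j) = 0}).Finite ∧
              ({x : Fin n → ℂ |
                    (∀ k : Fin i, ∑ j : Fin n, (Θ k j : ℂ) * x j = 1) ∧
                      ∀ k : Fin (n - i), ∑ j : Fin r, (Λ k j : ℂ) * aeval x (f j) = 0} \
                  {x : Fin n → ℂ | ∀ j : Fin r, aeval x (f j) = 0}).ncard = gi := by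
  obtain ⟨c, hc, g, h⟩ := generic_saturation_count_general (F := ℚ) (Ω := ℂ)
    (ι := Fin i) (κ := Fin (n - i)) (by simpa using Nat.add_sub_cancel' hi.le) f
  refine ⟨c, hc, g, fun Θ Λ μ hcΘ => ?_⟩
  rw [satIdeal_eq_saturationIdeal]
  simpa [linearSection, funext_iff, Matrix.mulVec, dotProduct] using h Θ Λ μ hcΘ
end

section
/- Let H_1,…,H_m ∈ ℚ[p_1,…,p_ℓ][x_1,…,x_n], let 𝔎 = ℚ(p_1,…,p_ℓ), let I ⊆ 𝔎[x_1,…,x_n] be the ideal generated by the images of H_1,…,H_m, and for p* ∈ ℂ^ℓ let I_{p*} ⊆ ℂ[x_1,…,x_n] be the ideal generated by the specializations H_1(p*),…,H_m(p*). Then for every d ≥ 0 there exists a nonzero polynomial c_d ∈ ℚ[p_1,…,p_ℓ] such that for all p* ∈ ℂ^ℓ with c_d(p*) ≠ 0 one has HF_{I_{p*}}(d) = HF_I(d), i.e., dim_ℂ((I_{p*})_{≤d}) = dim_𝔎(I_{≤d}). -/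
/-!
The degree-`≤ d` dimension of an ideal over a field is the number of its leading monomials of degree
at most `d`, for a graded monomial order (degree-lexicographic here). So it suffices that a generic
specialization does not change the set of leading monomials.

Let `J = (H₁,…,H_m) ⊆ A[x]` with `A = ℚ[p]`. By Dickson's lemma every leading monomial of `J` is a
multiple of one of finitely many; let `c ∈ A` be the product of the leading coefficients of elements
of `J` realizing these. Then every leading monomial `s` of `J` is attained by some `g s ∈ J` whose
leading coefficient divides `c`. If `φ : A → K` is a ring homomorphism to a field with `φ c ≠ 0`,
then `φ (g s)` still has leading monomial `s`, and by pseudo-division the `φ (g s)` span over `K`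
the ideal generated by the `φ (H j)`. Hence the degree-`≤ d` part of that ideal has a dimension that
does not depend on `φ`. This applies both to the inclusion of `A` in its fraction field and to
evaluation at a point `p*` with `c(p*) ≠ 0`.
-/

open MvPolynomial

set_option synthInstance.maxHeartbeats 1000000
set_option maxHeartbeats 1000000

open scoped MonomialOrder

section DistinctLeadingMonomials

variable {ι σ R : Type*}

lemma exists_degree_mem_support_linearCombination [CommSemiring R] [NoZeroDivisors R]
    (m : MonomialOrder σ) {h : ι → MvPolynomial σ R} (hne : ∀ i, h i ≠ 0)
    (hinj : Function.Injective fun i => m.degree (h i)) {a : ι →₀ R} (ha : a ≠ 0) :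
    ∃ i, m.degree (h i) ∈ (Finsupp.linearCombination R h a).support ∧
      ∀ j ∈ a.support, m.degree (h j) ≼[m] m.degree (h i) := by
  obtain ⟨i, hi, hmax⟩ := a.support.exists_max_image (fun j => m.toSyn (m.degree (h j)))
    (Finsupp.support_nonempty_iff.2 ha)
  have hlt : ∀ j ∈ a.support, j ≠ i → m.degree (h j) ≺[m] m.degree (h i) := fun j hj hji =>
    (hmax j hj).lt_of_ne ((m.toSyn.injective.comp hinj).ne hji)
  refine ⟨i, ?_, hmax⟩
  rw [mem_support_iff, Finsupp.linearCombination_apply, Finsupp.sum, coeff_sum,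
    Finset.sum_eq_single_of_mem i hi fun j hj hji => by
      rw [coeff_smul, m.coeff_eq_zero_of_lt (hlt j hj hji), smul_zero]]
  exact mul_ne_zero (Finsupp.mem_support_iff.1 hi) (m.coeff_degree_ne_zero_iff.2 (hne i))

lemma linearIndependent_of_injective_degree [CommRing R] [NoZeroDivisors R]
    (m : MonomialOrder σ) {h : ι → MvPolynomial σ R} (hne : ∀ i, h i ≠ 0)
    (hinj : Function.Injective fun i => m.degree (h i)) : LinearIndependent R h := by
  rw [linearIndependent_iff]
  intro a ha
  by_contra ha₀
  obtain ⟨i, hi, -⟩ := exists_degree_mem_support_linearCombination m hne hinj ha₀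
  simp [ha] at hi

variable [LinearOrder σ] [WellFoundedGT σ]

lemma totalDegree_le_totalDegree_linearCombination [CommSemiring R] [NoZeroDivisors R]
    {h : ι → MvPolynomial σ R} (hne : ∀ i, h i ≠ 0)
    (hinj : Function.Injective fun i => MonomialOrder.degLex.degree (h i)) {a : ι →₀ R} {j : ι}
    (hj : j ∈ a.support) :
    (h j).totalDegree ≤ (Finsupp.linearCombination R h a).totalDegree := by
  have ha : a ≠ 0 := Finsupp.support_nonempty_iff.1 ⟨j, hj⟩
  obtain ⟨i, hi, hmax⟩ :=
    exists_degree_mem_support_linearCombination MonomialOrder.degLex hne hinj ha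
  calc (h j).totalDegree ≤ (h i).totalDegree := degLex_totalDegree_monotone (hmax j hj)
    _ = (MonomialOrder.degLex.degree (h i)).degree := degree_degLexDegree.symm
    _ ≤ (Finsupp.linearCombination R h a).totalDegree := le_totalDegree hi

lemma span_range_inf_restrictTotalDegree [CommSemiring R] [NoZeroDivisors R]
    {h : ι → MvPolynomial σ R} (hne : ∀ i, h i ≠ 0)
    (hinj : Function.Injective fun i => MonomialOrder.degLex.degree (h i)) (d : ℕ) :
    Submodule.span R (Set.range h) ⊓ restrictTotalDegree σ R d =
      Submodule.span R (h '' {i | (h i).totalDegree ≤ d}) := by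
  apply le_antisymm
  · rintro f ⟨hf, hfd⟩
    rw [SetLike.mem_coe, mem_restrictTotalDegree] at hfd
    obtain ⟨a, rfl⟩ := Finsupp.mem_span_range_iff_exists_finsupp.1 hf
    exact (Finsupp.mem_span_image_iff_linearCombination R).2 ⟨a, fun j hj =>
      (totalDegree_le_totalDegree_linearCombination hne hinj hj).trans hfd, rfl⟩
  · rw [Submodule.span_le]
    rintro _ ⟨i, hi, rfl⟩
    exact ⟨Submodule.subset_span ⟨i, rfl⟩, (mem_restrictTotalDegree ..).2 hi⟩

lemma finrank_span_range_inf_restrictTotalDegree [CommRing R] [IsDomain R]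
    {h : ι → MvPolynomial σ R} (hne : ∀ i, h i ≠ 0)
    (hinj : Function.Injective fun i => MonomialOrder.degLex.degree (h i)) (d : ℕ) :
    Module.finrank R ↥(Submodule.span R (Set.range h) ⊓ restrictTotalDegree σ R d) =
      Nat.card {i // (h i).totalDegree ≤ d} := by
  rw [span_range_inf_restrictTotalDegree hne hinj, Set.image_eq_range]
  exact Module.finrank_eq_nat_card_basis (Module.Basis.span
    ((linearIndependent_of_injective_degree _ hne hinj).comp _ Subtype.val_injective))

end DistinctLeadingMonomials

section LeadingMonomials

variable {σ R : Type*}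

/-- The set of leading monomials of the nonzero elements of an ideal `J` of a polynomial ring, given
by their exponent vectors. -/
def leadingMonomials [CommSemiring R] (m : MonomialOrder σ) (J : Ideal (MvPolynomial σ R)) :
    Set (σ →₀ ℕ) :=
  m.degree '' {f | f ∈ J ∧ f ≠ 0}

lemma exists_finite_subset_forall_exists_le {α : Type*} [PartialOrder α] [WellQuasiOrderedLE α]
    (s : Set α) : ∃ t ⊆ s, t.Finite ∧ ∀ a ∈ s, ∃ b ∈ t, b ≤ a := by
  have hs : s.IsPWO := Set.isPWO_of_wellQuasiOrderedLE s
  refine ⟨{b | Minimal (· ∈ s) b}, fun b hb => hb.prop, ?_, fun a ha => ?_⟩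
  · exact (setOfPred_minimal_antichain _).finite_of_partiallyWellOrderedOn
      (hs.mono fun b hb => hb.prop)
  · obtain ⟨b, hba, hb⟩ := hs.exists_le_minimal ha
    exact ⟨b, hb, hba⟩

lemma exists_finite_subset_forall_exists_degree_le [Finite σ] [CommSemiring R]
    (m : MonomialOrder σ) (B : Set (MvPolynomial σ R)) :
    ∃ G ⊆ B, G.Finite ∧ ∀ f ∈ B, ∃ g ∈ G, m.degree g ≤ m.degree f := by
  have h := Set.exists_subset_image_finite_and.1
    (exists_finite_subset_forall_exists_le (m.degree '' B))
  simpa only [Set.forall_mem_image, Set.exists_mem_image] using h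

lemma exists_forall_leadingMonomials_leadingCoeff_dvd [Finite σ] [CommSemiring R] [IsDomain R]
    (m : MonomialOrder σ) (J : Ideal (MvPolynomial σ R)) :
    ∃ c : R, c ≠ 0 ∧
      ∀ s ∈ leadingMonomials m J, ∃ g ∈ J, m.degree g = s ∧ m.leadingCoeff g ∣ c := by
  classical
  obtain ⟨G, hGJ, hG, hle⟩ :=
    exists_finite_subset_forall_exists_degree_le m {f | f ∈ J ∧ f ≠ 0}
  refine ⟨∏ g ∈ hG.toFinset, m.leadingCoeff g, ?_, ?_⟩
  · exact Finset.prod_ne_zero_iff.2 fun g hg =>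
      m.leadingCoeff_ne_zero_iff.2 (hGJ (hG.mem_toFinset.1 hg)).2
  · rintro _ ⟨f, hf, rfl⟩
    obtain ⟨g, hg, hgf⟩ := hle f hf
    refine ⟨monomial (m.degree f - m.degree g) 1 * g, J.mul_mem_left _ (hGJ hg).1, ?_, ?_⟩
    · rw [m.degree_mul (by simp) (hGJ hg).2, m.degree_monomial, if_neg one_ne_zero,
        tsub_add_cancel_of_le hgf]
    · rw [m.leadingCoeff_mul, m.leadingCoeff_monomial, one_mul]
      exact Finset.dvd_prod_of_mem _ (hG.mem_toFinset.2 hg)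

end LeadingMonomials

section Specialization

variable {σ A K : Type*}

lemma degree_map_of_leadingCoeff_ne_zero [CommSemiring A] [CommSemiring K] (m : MonomialOrder σ)
    (φ : A →+* K) {f : MvPolynomial σ A} (hf : φ (m.leadingCoeff f) ≠ 0) :
    m.degree (map φ f) = m.degree f := by
  refine m.toSyn.injective (le_antisymm ?_ (m.le_degree ?_))
  · exact m.degree_le_iff.2 fun b hb => m.le_degree (support_map_subset φ f hb)
  · rwa [mem_support_iff, coeff_map]

/-- The image of `J` is already closed under multiplication by monomials, and these span `K[x]`. -/
lemma restrictScalars_map_map_eq_span_image [CommSemiring A] [CommSemiring K] (φ : A →+* K)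
    (J : Ideal (MvPolynomial σ A)) :
    (J.map (map φ)).restrictScalars K =
      Submodule.span K (map φ '' (J : Set (MvPolynomial σ A))) := by
  apply le_antisymm
  · rw [Ideal.map, Ideal.span, ← Submodule.span_smul_of_span_eq_top (basisMonomials σ K).span_eq]
    refine Submodule.span_mono ?_
    rintro _ ⟨_, ⟨s, rfl⟩, _, ⟨f, hf, rfl⟩, rfl⟩
    exact ⟨monomial s 1 * f, J.mul_mem_left _ hf, by simp⟩
  · exact Submodule.span_le.2 fun _ hf => Ideal.subset_span hf

/-- Pseudo-division: if `s` is the leading monomial of `f`, the S-polynomial of `f` and `g s` is a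
combination of the two with smaller leading monomial, and its coefficient of `f` becomes a unit
in `K`. -/
lemma map_mem_span_range [CommRing A] [CommRing K] (m : MonomialOrder σ) (φ : A →+* K)
    {J : Ideal (MvPolynomial σ A)} {g : leadingMonomials m J → MvPolynomial σ A}
    (hgJ : ∀ s, g s ∈ J) (hg : ∀ s, m.degree (g s) = s)
    (hφ : ∀ s, IsUnit (φ (m.leadingCoeff (g s)))) {f : MvPolynomial σ A} (hf : f ∈ J) :
    map φ f ∈ Submodule.span K (Set.range fun s => map φ (g s)) := by
  induction hs : m.toSyn (m.degree f) using WellFoundedLT.induction generalizing f with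
  | ind _ ih =>
  obtain rfl | hf₀ := eq_or_ne f 0
  · simp
  let s : leadingMonomials m J := ⟨m.degree f, f, ⟨hf, hf₀⟩, rfl⟩
  have hr : map φ (m.sPolynomial f (g s)) ∈ Submodule.span K (Set.range fun s => map φ (g s)) := by
    by_cases hr₀ : m.sPolynomial f (g s) = 0
    · simp [hr₀]
    · exact ih _ (hs ▸ m.sPolynomial_lt_of_degree_ne_zero_of_degree_eq (hg s).symm hr₀)
        (m.sPolynomial_mem_ideal hf (hgJ s)) rfl
  have hsum : φ (m.leadingCoeff (g s)) • map φ f =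
      map φ (m.sPolynomial f (g s)) + φ (m.leadingCoeff f) • map φ (g s) := by
    simp [MonomialOrder.sPolynomial, hg s, s, smul_eq_C_mul]
  rw [← Submodule.smul_mem_iff_of_isUnit _ (hφ s), hsum]
  exact add_mem hr (Submodule.smul_mem _ _ (Submodule.subset_span ⟨s, rfl⟩))

lemma restrictScalars_map_map_eq_span_range [CommRing A] [CommRing K] (m : MonomialOrder σ)
    (φ : A →+* K) {J : Ideal (MvPolynomial σ A)} {g : leadingMonomials m J → MvPolynomial σ A}
    (hgJ : ∀ s, g s ∈ J) (hg : ∀ s, m.degree (g s) = s)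
    (hφ : ∀ s, IsUnit (φ (m.leadingCoeff (g s)))) :
    (J.map (map φ)).restrictScalars K = Submodule.span K (Set.range fun s => map φ (g s)) := by
  rw [restrictScalars_map_map_eq_span_image]
  apply le_antisymm <;> rw [Submodule.span_le]
  · rintro _ ⟨f, hf, rfl⟩
    exact map_mem_span_range m φ hgJ hg hφ hf
  · rintro _ ⟨s, rfl⟩
    exact Submodule.subset_span ⟨g s, hgJ s, rfl⟩

lemma finrank_map_inf_restrictTotalDegree [LinearOrder σ] [WellFoundedGT σ] [CommRing A] [Field K]
    (φ : A →+* K) {J : Ideal (MvPolynomial σ A)} {c : A} (hφc : φ c ≠ 0)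
    (hJ : ∀ s ∈ leadingMonomials MonomialOrder.degLex J, ∃ g ∈ J,
      MonomialOrder.degLex.degree g = s ∧ MonomialOrder.degLex.leadingCoeff g ∣ c) (d : ℕ) :
    Module.finrank K ↥((J.map (map φ)).restrictScalars K ⊓ restrictTotalDegree σ K d) =
      Nat.card {s : leadingMonomials MonomialOrder.degLex J // s.1.degree ≤ d} := by
  choose g hgJ hg hgc using fun s : leadingMonomials MonomialOrder.degLex J => hJ s s.2
  have hφ (s) : φ (MonomialOrder.degLex.leadingCoeff (g s)) ≠ 0 :=
    ne_zero_of_dvd_ne_zero hφc (map_dvd φ (hgc s))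
  have hdeg (s) : MonomialOrder.degLex.degree (map φ (g s)) = s := by
    rw [degree_map_of_leadingCoeff_ne_zero _ φ (hφ s), hg]
  have hne (s) : map φ (g s) ≠ 0 := fun h₀ => hφ s <| by
    rw [MonomialOrder.leadingCoeff, ← coeff_map, h₀, coeff_zero]
  have hinj : Function.Injective fun s => MonomialOrder.degLex.degree (map φ (g s)) := by
    simpa only [hdeg] using Subtype.val_injective
  rw [restrictScalars_map_map_eq_span_range _ φ hgJ hg fun s => (hφ s).isUnit,
    finrank_span_range_inf_restrictTotalDegree hne hinj]
  simp only [← degree_degLexDegree, hdeg]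

lemma span_range_map {ι : Type*} [CommSemiring A] [CommSemiring K] (φ : A →+* K)
    (H : ι → MvPolynomial σ A) :
    Ideal.span (Set.range fun j => map φ (H j)) = (Ideal.span (Set.range H)).map (map φ) := by
  rw [Ideal.map_span, ← Set.range_comp, Function.comp_def]

end Specialization

theorem generic_specialization_hilbert_general {σ ι A F : Type*} [Finite σ] [CommRing A] [Field F]
    {ψ : A →+* F} (hψ : Function.Injective ψ) (H : ι → MvPolynomial σ A) :
    ∃ c : A, c ≠ 0 ∧ ∀ {K : Type*} [Field K] (φ : A →+* K), φ c ≠ 0 → ∀ d : ℕ,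
      Module.finrank K
          ↥((Ideal.span (Set.range fun j => map φ (H j))).restrictScalars K ⊓
            restrictTotalDegree σ K d) =
        Module.finrank F
          ↥((Ideal.span (Set.range fun j => map ψ (H j))).restrictScalars F ⊓
            restrictTotalDegree σ F d) := by
  have : IsDomain A := hψ.isDomain ψ
  let : LinearOrder σ := LinearOrder.lift' _ (Finite.equivFin σ).injective
  obtain ⟨c, hc, hcJ⟩ := exists_forall_leadingMonomials_leadingCoeff_dvd MonomialOrder.degLex
    (Ideal.span (Set.range H))
  refine ⟨c, hc, fun φ hφ d => ?_⟩
  have hψc : ψ c ≠ 0 := (map_ne_zero_iff ψ hψ).2 hc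
  rw [span_range_map, span_range_map, finrank_map_inf_restrictTotalDegree φ hφ hcJ,
    finrank_map_inf_restrictTotalDegree ψ hψc hcJ]

/-- Let `H₁,…,H_m ∈ ℚ[p₁,…,p_ℓ][x₁,…,xₙ]`, let `𝔎 = ℚ(p₁,…,p_ℓ)`, let
`I ⊆ 𝔎[x₁,…,xₙ]` be the ideal generated by the images of the `H_j`, and for `p* ∈ ℂ^ℓ` let
`I_{p*} ⊆ ℂ[x₁,…,xₙ]` be generated by the specializations `H_j(p*)`.  Then for every `d ≥ 0`
there is a nonzero `c_d ∈ ℚ[p₁,…,p_ℓ]` such that `c_d(p*) ≠ 0` implies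
`dim_ℂ((I_{p*})_{≤d}) = dim_𝔎(I_{≤d})`, i.e. `HF_{I_{p*}}(d) = HF_I(d)`. -/
theorem generic_specialization_hilbert (ℓ n m : ℕ)
    (H : Fin m → MvPolynomial (Fin n) (MvPolynomial (Fin ℓ) ℚ)) (d : ℕ) :
    ∃ c : MvPolynomial (Fin ℓ) ℚ, c ≠ 0 ∧
      ∀ pstar : Fin ℓ → ℂ, aeval pstar c ≠ 0 →
        Module.finrank ℂ
            ↥((Ideal.span (Set.range fun j =>
                  map ((aeval pstar : MvPolynomial (Fin ℓ) ℚ →ₐ[ℚ] ℂ) :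
                      MvPolynomial (Fin ℓ) ℚ →+* ℂ) (H j))).restrictScalars ℂ ⊓
              restrictTotalDegree (Fin n) ℂ d) =
          Module.finrank (RatFuncField ℓ)
            ↥((Ideal.span (Set.range fun j =>
                  map (algebraMap (MvPolynomial (Fin ℓ) ℚ)
                      (RatFuncField ℓ)) (H j))).restrictScalars (RatFuncField ℓ) ⊓
              restrictTotalDegree (Fin n) (RatFuncField ℓ) d) := by
  obtain ⟨c, hc, h⟩ := generic_specialization_hilbert_general
    (IsFractionRing.injective (MvPolynomial (Fin ℓ) ℚ) (RatFuncField ℓ)) H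
  exact ⟨c, hc, fun pstar hp => h _ hp d⟩
end

section
/- Let the square polynomial system 𝒢 (in the kn + k² unknowns (y_1,…,y_k,Λ)) be as described. If (q_1,…,q_k,Λ*) is a nonsingular solution of 𝒢 = 0, then the matrix S_d(q_1,…,q_k) is invertible with Λ* = S_d(q_1,…,q_k)^{−1}, and each q_i is a nonsingular solution of G_{p*} = 0, i.e., G_{p*}(q_i) = 0 and the n×n Jacobian matrix of G_{p*} at q_i is invertible. -/
/-!
The `k²` equations `Λ·S_d = I_k` say that `Λ*` is a left inverse of the square matrix
`S_d(q₁,…,q_k)`, hence its inverse. The block `G_{p*}(y_a) = 0` of `𝒢` involves only the variables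
`y_a`: projecting to this block intertwines `𝒢` with `G_{p*}`. By the chain rule it also intertwines
their derivatives, so surjectivity of the derivative of `𝒢` passes to that of `G_{p*}` at `q_a`, and
a surjective square matrix is invertible.
-/

open MvPolynomial

set_option synthInstance.maxHeartbeats 1000000
set_option maxHeartbeats 1000000

section Derivative

variable {𝕜 : Type*} [NontriviallyNormedField 𝕜]

theorem surjective_of_hasFDerivAt_of_intertwine {X Y E F : Type*}
    [NormedAddCommGroup X] [NormedSpace 𝕜 X] [NormedAddCommGroup Y] [NormedSpace 𝕜 Y]
    [NormedAddCommGroup E] [NormedSpace 𝕜 E] [NormedAddCommGroup F] [NormedSpace 𝕜 F]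
    {Φ : X → Y} {Φ' : X →L[𝕜] Y} {G : E → F} {G' : E →L[𝕜] F} {x : X}
    (P : X →L[𝕜] E) (Q : Y →L[𝕜] F) (hQ : Function.Surjective Q) (hcomm : Q ∘ Φ = G ∘ P)
    (hΦ : HasFDerivAt Φ Φ' x) (hG : HasFDerivAt G G' (P x)) (hsurj : Function.Surjective Φ') :
    Function.Surjective G' := by
  have hQΦ : HasFDerivAt (Q ∘ Φ) (Q ∘L Φ') x := Q.hasFDerivAt.comp x hΦ
  have hGP : HasFDerivAt (Q ∘ Φ) (G' ∘L P) x := hcomm ▸ hG.comp x P.hasFDerivAt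
  have hderiv : ⇑Q ∘ ⇑Φ' = ⇑G' ∘ ⇑P := congrArg DFunLike.coe (hQΦ.unique hGP)
  exact .of_comp (hderiv ▸ hQ.comp hsurj)

variable {σ : Type*} [Fintype σ]

theorem hasFDerivAt_mvPolynomial_eval (p : MvPolynomial σ 𝕜) (x : σ → 𝕜) :
    HasFDerivAt (fun y => eval y p)
      (∑ t, eval x (pderiv t p) • (ContinuousLinearMap.proj t : (σ → 𝕜) →L[𝕜] 𝕜)) x := by
  classical
  induction p using MvPolynomial.induction_on with
  | C a =>
    simp only [eval_C]
    exact (hasFDerivAt_const a x).congr_fderiv (by ext; simp)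
  | add p q hp hq =>
    simp only [map_add]
    exact (hp.fun_add hq).congr_fderiv (by ext; simp [add_mul, Finset.sum_add_distrib])
  | mul_X p i hp =>
    simp only [map_mul, eval_X]
    refine (hp.fun_mul (hasFDerivAt_apply i x)).congr_fderiv ?_
    ext v
    simp [pderiv_X, Pi.single_apply, apply_ite, mul_add, Finset.sum_add_distrib, Finset.mul_sum,
      mul_comm, mul_left_comm]

/-- The Jacobian matrix at `x` of the polynomial map `h`, in terms of formal partial derivatives. -/
noncomputable def jacobianMatrix {ι τ R : Type*} [CommSemiring R]
    (h : ι → MvPolynomial τ R) (x : τ → R) : Matrix ι τ R :=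
  .of fun j t => eval x (pderiv t (h j))

theorem hasFDerivAt_mvPolynomial_eval_pi {ι : Type*} (h : ι → MvPolynomial σ 𝕜) (x : σ → 𝕜) :
    HasFDerivAt (fun y j => eval y (h j)) (.mk (jacobianMatrix h x).mulVecLin) x := by
  refine hasFDerivAt_pi'.2 fun j => (hasFDerivAt_mvPolynomial_eval (h j) x).congr_fderiv ?_
  ext v
  simp [jacobianMatrix, Matrix.mulVec, dotProduct]

end Derivative

section AugmentedSystem

variable {E F κ R 𝕜 : Type*}

/-- The generalized Vandermonde matrix, the matrix `S_d(y₁,…,y_k)` of the theorem when the functions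
`f b` are monomials. -/
def evalMatrix (f : κ → E → R) (y : κ → E) : Matrix κ κ R :=
  .of fun a b => f b (y a)

/-- The system `G(y_a) = 0`, `Λ·S = 1`, where `S` is the matrix of values of the functions `f b` at
the points `y_a`. The unknown `Λ` is a plain function `κ → κ → R`, so that the space of unknowns
carries the sup norm. -/
def augmentedSystem [Fintype κ] [DecidableEq κ] [Ring R] (G : E → F) (f : κ → E → R) :
    (κ → E) × (κ → κ → R) → (κ → F) × (κ → κ → R) :=
  fun z => (fun a => G (z.1 a), Matrix.of.symm (Matrix.of z.2 * evalMatrix f z.1 - 1))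

theorem augmentedSystem_eq_zero_iff [Fintype κ] [DecidableEq κ] [Ring R] [Zero F]
    {G : E → F} {f : κ → E → R} {z : (κ → E) × (κ → κ → R)} :
    augmentedSystem G f z = 0 ↔
      (∀ a, G (z.1 a) = 0) ∧ Matrix.of z.2 * evalMatrix f z.1 = 1 := by
  rw [← sub_eq_zero (b := (1 : Matrix κ κ R))]
  exact Prod.ext_iff.trans (and_congr_left' funext_iff)

variable [NontriviallyNormedField 𝕜] [NormedAddCommGroup E] [NormedSpace 𝕜 E]
  [NormedAddCommGroup F] [NormedSpace 𝕜 F] [Fintype κ] [DecidableEq κ]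
  {G : E → F} {f : κ → E → 𝕜} {z : (κ → E) × (κ → κ → 𝕜)}

theorem differentiableAt_augmentedSystem (hG : ∀ a, DifferentiableAt 𝕜 G (z.1 a))
    (hf : ∀ a b, DifferentiableAt 𝕜 (f b) (z.1 a)) :
    DifferentiableAt 𝕜 (augmentedSystem G f) z := by
  have hpoint (a : κ) : DifferentiableAt 𝕜
      (fun w : (κ → E) × (κ → κ → 𝕜) => w.1 a) z := by fun_prop
  refine .prodMk (differentiableAt_pi.2 fun a => (hG a).comp z (hpoint a))
    (differentiableAt_pi.2 fun a => differentiableAt_pi.2 fun b => ?_)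
  have hentry (c : κ) : DifferentiableAt 𝕜
      (fun w : (κ → E) × (κ → κ → 𝕜) => f b (w.1 c)) z := (hf c b).comp z (hpoint c)
  have hcoeff (c : κ) : DifferentiableAt 𝕜
      (fun w : (κ → E) × (κ → κ → 𝕜) => w.2 a c) z := by fun_prop
  exact (DifferentiableAt.fun_sum fun c _ => (hcoeff c).mul (hentry c)).sub_const _

theorem surjective_of_hasFDerivAt_augmentedSystem
    {Φ' : (κ → E) × (κ → κ → 𝕜) →L[𝕜] (κ → F) × (κ → κ → 𝕜)} {a : κ} {G' : E →L[𝕜] F}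
    (hΦ : HasFDerivAt (augmentedSystem G f) Φ' z) (hsurj : Function.Surjective Φ')
    (hG : HasFDerivAt G G' (z.1 a)) : Function.Surjective G' :=
  surjective_of_hasFDerivAt_of_intertwine (.proj a ∘L .fst 𝕜 (κ → E) (κ → κ → 𝕜))
    (ContinuousLinearMap.proj (φ := fun _ => F) a ∘L .fst 𝕜 (κ → F) (κ → κ → 𝕜))
    ((Function.surjective_eval (β := fun _ => F) a).comp Prod.fst_surjective) rfl hΦ hG hsurj

theorem nonsingular_solution_structure_general {σ : Type*} [Fintype σ] [DecidableEq σ]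
    (h : σ → MvPolynomial σ 𝕜) (f : κ → (σ → 𝕜) → 𝕜) {z : (κ → σ → 𝕜) × (κ → κ → 𝕜)}
    {Φ' : (κ → σ → 𝕜) × (κ → κ → 𝕜) →L[𝕜] (κ → σ → 𝕜) × (κ → κ → 𝕜)}
    (hz : augmentedSystem (fun x j => eval x (h j)) f z = 0)
    (hΦ : HasFDerivAt (augmentedSystem (fun x j => eval x (h j)) f) Φ' z)
    (hsurj : Function.Surjective Φ') :
    IsUnit (evalMatrix f z.1) ∧ Matrix.of z.2 = (evalMatrix f z.1)⁻¹ ∧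
      ∀ a, (∀ j, eval (z.1 a) (h j) = 0) ∧ IsUnit (jacobianMatrix h (z.1 a)) := by
  obtain ⟨hroot, hleft⟩ := augmentedSystem_eq_zero_iff.1 hz
  have hjacobian (a : κ) : IsUnit (jacobianMatrix h (z.1 a)) :=
    Matrix.mulVec_surjective_iff_isUnit.1 <|
      surjective_of_hasFDerivAt_augmentedSystem hΦ hsurj
        (hasFDerivAt_mvPolynomial_eval_pi h (z.1 a))
  exact ⟨.of_mul_eq_one_right _ hleft, (Matrix.inv_eq_left_inv hleft).symm,
    fun a => ⟨congrFun (hroot a), hjacobian a⟩⟩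

end AugmentedSystem

/-- If `(q₁,…,q_k,Λ*)` is a nonsingular solution of `𝒢 = 0`, then the
matrix `S_d(q₁,…,q_k)` is invertible with `Λ* = S_d(q₁,…,q_k)⁻¹`, and each `qᵢ` is a
nonsingular solution of `G_{p*} = 0`, i.e. `G_{p*}(qᵢ) = 0` and the `n×n` Jacobian matrix of
`G_{p*}` at `qᵢ` is invertible. -/
theorem nonsingular_solution_structure (ℓ n k d : ℕ)
    (H : Fin n → MvPolynomial (Fin n) (MvPolynomial (Fin ℓ) ℚ))
    (pstar : Fin ℓ → ℂ)
    (m : Fin k → (Fin n →₀ ℕ)) (hm : Function.Injective m)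
    (hmd : ∀ j, ((m j).sum fun _ e => e) ≤ d)
    (z : (Fin k → Fin n → ℂ) × (Fin k → Fin k → ℂ))
    (hz : sysG pstar H m z = 0)
    (hreg : Function.Bijective (fderiv ℂ (sysG pstar H m) z)) :
    IsUnit (Matrix.of fun a b : Fin k => ∏ t : Fin n, z.1 a t ^ (m b) t) ∧
      Matrix.of z.2 = (Matrix.of fun a b : Fin k => ∏ t : Fin n, z.1 a t ^ (m b) t)⁻¹ ∧
      ∀ a : Fin k,
        (∀ j : Fin n, eval (z.1 a) (specialize pstar (H j)) = 0) ∧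
          IsUnit (Matrix.of fun j t : Fin n =>
            eval (z.1 a) (pderiv t (specialize pstar (H j)))) :=
  nonsingular_solution_structure_general (fun j => specialize pstar (H j))
    (fun b y => ∏ t, y t ^ m b t) hz
    (differentiableAt_augmentedSystem
      (fun a => (hasFDerivAt_mvPolynomial_eval_pi _ (z.1 a)).differentiableAt)
      fun a b => by fun_prop).hasFDerivAt hreg.2
end
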